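/- For every integer n ≥ 1, the Wang shift Ω_n is minimal: every nonempty subset X ⊆ Ω_n that is closed in the product topology and invariant under the shift ℤ^2-action equals Ω_n. Moreover, Ω_n equals the substitutive subshift X_{ω_n}: Ω_n is exactly the set of configurations z : ℤ^2 → T_n all of whose finite rectangular subpatterns occur as a subpattern of ω_n^m(t) for some m ∈ ℕ and some t ∈ T_n. -/

import Mathlib

structure WangTile (C : Type*) where
  right : C
  top : C
  left : C
  bottom : C
deriving DecidableEq

abbrev Lbl : Type := ℤ × ℤ × ℤ

def Vn (n : ℤ) : Set Lbl :=
  {v | 0 ≤ v.1 ∧ v.1 ≤ v.2.1 ∧ v.2.1 ≤ 1 ∧ v.2.1 ≤ v.2.2 ∧ v.2.2 ≤ n + 1}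

def hatT {C : Type*} (t : WangTile C) : WangTile C :=
  ⟨t.top, t.right, t.bottom, t.left⟩

def whiteTiles (n : ℤ) : Set (WangTile Lbl) :=
  {t | ∃ i j : ℤ, 1 ≤ i ∧ i ≤ n ∧ 1 ≤ j ∧ j ≤ n ∧
    t = ⟨(1, 1, i + 1), (1, 1, j + 1), (1, 1, i), (1, 1, j)⟩}

def blueH (n : ℤ) : Set (WangTile Lbl) :=
  {t | ∃ i : ℤ, 0 ≤ i ∧ i ≤ n ∧ t = ⟨(0, 0, i + 1), (1, 1, 1), (0, 0, i), (1, 1, n)⟩}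

def greenH (n : ℤ) : Set (WangTile Lbl) :=
  {t | ∃ i : ℤ, 0 ≤ i ∧ i ≤ n ∧ t = ⟨(0, 1, i + 1), (1, 1, 1), (0, 0, i), (1, 1, n + 1)⟩}

def yellowH (n : ℤ) : Set (WangTile Lbl) :=
  {t | ∃ i : ℤ, 1 ≤ i ∧ i ≤ n ∧ t = ⟨(0, 1, i + 1), (1, 1, 2), (0, 1, i), (1, 1, n + 1)⟩}

def antiH (n : ℤ) : Set (WangTile Lbl) :=
  {t | ∃ i : ℤ, 1 ≤ i ∧ i ≤ n ∧ t = ⟨(0, 0, i + 1), (1, 1, 2), (0, 1, i), (1, 1, n)⟩}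

def junctionTile (n k l r s : ℤ) : WangTile Lbl :=
  ⟨(0, k, l), (0, r, s), (0, s, r + n), (0, l, k + n)⟩

def jPairs : Set (ℤ × ℤ) := {(0, 0), (0, 1), (1, 1)}

def junctions (n : ℤ) : Set (WangTile Lbl) :=
  {t | ∃ k l r s : ℤ, (k, l) ∈ jPairs ∧ (r, s) ∈ jPairs ∧ t = junctionTile n k l r s}

def Text (n : ℤ) : Set (WangTile Lbl) :=
  whiteTiles n ∪ blueH n ∪ greenH n ∪ yellowH n ∪ antiH n ∪
    hatT '' blueH n ∪ hatT '' greenH n ∪ hatT '' yellowH n ∪ hatT '' antiH n ∪ junctions n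

def Dset (n : ℤ) : Set (WangTile Lbl) :=
  {(⟨(0, 0, n + 1), (1, 1, 1), (0, 0, n), (1, 1, n)⟩ : WangTile Lbl),
    hatT (⟨(0, 0, n + 1), (1, 1, 1), (0, 0, n), (1, 1, n)⟩ : WangTile Lbl),
    junctionTile n 0 0 1 1, junctionTile n 1 1 0 0}

def Tmet (n : ℤ) : Set (WangTile Lbl) :=
  Text n \ (antiH n ∪ hatT '' antiH n ∪ Dset n)

def ValidConfig {C : Type*} (T : Set (WangTile C)) (x : ℤ × ℤ → WangTile C) : Prop :=
  (∀ m, x m ∈ T) ∧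
    (∀ m : ℤ × ℤ, (x m).right = (x (m.1 + 1, m.2)).left) ∧
    (∀ m : ℤ × ℤ, (x m).top = (x (m.1, m.2 + 1)).bottom)

def ValidPattern {C : Type*} (T : Set (WangTile C)) (w h : ℕ) (p : ℕ → ℕ → WangTile C) : Prop :=
  (∀ i j, i < w → j < h → p i j ∈ T) ∧
    (∀ i j, i + 1 < w → j < h → (p i j).right = (p (i + 1) j).left) ∧
    (∀ i j, i < w → j + 1 < h → (p i j).top = (p i (j + 1)).bottom)

def bottomWord {C : Type*} (w : ℕ) (p : ℕ → ℕ → WangTile C) : List C :=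
  (List.range w).map fun i => (p i 0).bottom

def topWord {C : Type*} (w h : ℕ) (p : ℕ → ℕ → WangTile C) : List C :=
  (List.range w).map fun i => (p i (h - 1)).top

def leftWord {C : Type*} (h : ℕ) (p : ℕ → ℕ → WangTile C) : List C :=
  (List.range h).map fun j => (p 0 j).left

def rightWord {C : Type*} (w h : ℕ) (p : ℕ → ℕ → WangTile C) : List C :=
  (List.range h).map fun j => (p (w - 1) j).right

def tau (n : ℤ) (v : Lbl) : List Lbl :=
  if v.1 = v.2.2 then
    (0, v.1 - v.2.1 + 1, n + 1) :: List.replicate (n - v.2.2).toNat (1, 1, n + 1)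
  else
    (0, v.1 - v.2.1 + 1, n) ::
      (List.replicate (v.2.2 - v.1 - 1).toNat (1, 1, n) ++
        List.replicate (n + 1 - v.2.2).toNat (1, 1, n + 1))

/-- `q` (of size `w' × h'`) is the image under `ω_n` of the pattern `p` (of size `w × h`)
over the tile set `T`: there are block boundaries `A`, `B` such that each block of `q`
is the unique valid rectangular pattern over `T` whose boundary words are the images
under `τ_n` of the labels of the corresponding tile of `p`. -/
def IsPatternImage (n : ℤ) (T : Set (WangTile Lbl)) (w h : ℕ)
    (p : ℕ → ℕ → WangTile Lbl) (w' h' : ℕ) (q : ℕ → ℕ → WangTile Lbl) : Prop :=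
  ∃ A B : ℕ → ℕ, A 0 = 0 ∧ B 0 = 0 ∧ A w = w' ∧ B h = h' ∧
    (∀ k, k < w → A k < A (k + 1)) ∧ (∀ k, k < h → B k < B (k + 1)) ∧
    ∀ l1 l2, l1 < w → l2 < h →
      ValidPattern T (A (l1 + 1) - A l1) (B (l2 + 1) - B l2)
        (fun i j => q (A l1 + i) (B l2 + j)) ∧
      rightWord (A (l1 + 1) - A l1) (B (l2 + 1) - B l2)
        (fun i j => q (A l1 + i) (B l2 + j)) = tau n (p l1 l2).right ∧
      topWord (A (l1 + 1) - A l1) (B (l2 + 1) - B l2)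
        (fun i j => q (A l1 + i) (B l2 + j)) = tau n (p l1 l2).top ∧
      leftWord (B (l2 + 1) - B l2) (fun i j => q (A l1 + i) (B l2 + j)) =
        tau n (p l1 l2).left ∧
      bottomWord (A (l1 + 1) - A l1) (fun i j => q (A l1 + i) (B l2 + j)) =
        tau n (p l1 l2).bottom

/-- `IterImage n T m a w h q` : `q` (of size `w × h`) is the pattern `ω_n^m(a)`. -/
def IterImage (n : ℤ) (T : Set (WangTile Lbl)) :
    ℕ → WangTile Lbl → ℕ → ℕ → (ℕ → ℕ → WangTile Lbl) → Prop
  | 0, a, w, h, q => w = 1 ∧ h = 1 ∧ q 0 0 = a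
  | m + 1, a, w, h, q =>
      ∃ (w' h' : ℕ) (p : ℕ → ℕ → WangTile Lbl),
        IterImage n T m a w' h' p ∧ IsPatternImage n T w' h' p w h q

instance : TopologicalSpace (WangTile Lbl) := ⊥

/-- The white tile with left index `i` and bottom index `j`. -/
def whiteTile (i j : ℤ) : WangTile Lbl :=
  ⟨(1, 1, i + 1), (1, 1, j + 1), (1, 1, i), (1, 1, j)⟩

/-- The common form of all horizontal coloured tiles. -/
def horTile (n y e i : ℤ) : WangTile Lbl :=
  ⟨(0, e, i + 1), (1, 1, 1 + y), (0, y, i), (1, 1, n + e)⟩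

theorem WangTile.ext_iff' {C : Type*} {s t : WangTile C} :
    s = t ↔ s.right = t.right ∧ s.top = t.top ∧ s.left = t.left ∧ s.bottom = t.bottom := by
  cases s; cases t; simp

theorem hatT_hatT {C : Type*} (t : WangTile C) : hatT (hatT t) = t := rfl

theorem hatT_eq_iff {C : Type*} {s t : WangTile C} : hatT s = t ↔ s = hatT t :=
  ⟨fun h => by rw [← h]; rfl, fun h => by rw [h]; rfl⟩

theorem mem_hor_iff {n : ℤ} {t : WangTile Lbl} :
    t ∈ blueH n ∪ greenH n ∪ yellowH n ∪ antiH n ↔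
      ∃ y e i : ℤ, 0 ≤ y ∧ y ≤ 1 ∧ 0 ≤ e ∧ e ≤ 1 ∧ y ≤ i ∧ i ≤ n ∧ t = horTile n y e i := by
  constructor
  · rintro (((⟨i, h0, h1, rfl⟩ | ⟨i, h0, h1, rfl⟩) | ⟨i, h0, h1, rfl⟩) | ⟨i, h0, h1, rfl⟩)
    · exact ⟨0, 0, i, by simp, by simp, by simp, by simp, h0, h1, by simp [horTile]⟩
    · exact ⟨0, 1, i, by simp, by simp, by simp, by simp, h0, h1, by simp [horTile]⟩
    · exact ⟨1, 1, i, by simp, by simp, by simp, by simp, h0, h1, by simp [horTile]⟩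
    · exact ⟨1, 0, i, by simp, by simp, by simp, by simp, h0, h1, by simp [horTile]⟩
  · rintro ⟨y, e, i, hy0, hy1, he0, he1, h0, h1, rfl⟩
    obtain rfl | rfl : y = 0 ∨ y = 1 := by omega
    · obtain rfl | rfl : e = 0 ∨ e = 1 := by omega
      · exact Or.inl (Or.inl (Or.inl ⟨i, h0, h1, by simp [horTile]⟩))
      · exact Or.inl (Or.inl (Or.inr ⟨i, h0, h1, by simp [horTile]⟩))
    · obtain rfl | rfl : e = 0 ∨ e = 1 := by omega
      · exact Or.inr ⟨i, h0, h1, by simp [horTile]⟩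
      · exact Or.inl (Or.inr ⟨i, h0, h1, by simp [horTile]⟩)

theorem mem_jPairs {k l : ℤ} : (k, l) ∈ jPairs ↔ 0 ≤ k ∧ k ≤ l ∧ l ≤ 1 := by
  simp only [jPairs, Set.mem_insert_iff, Set.mem_singleton_iff, Prod.mk.injEq]
  omega

theorem mem_Text_iff {n : ℤ} {t : WangTile Lbl} :
    t ∈ Text n ↔
      (∃ i j : ℤ, 1 ≤ i ∧ i ≤ n ∧ 1 ≤ j ∧ j ≤ n ∧ t = whiteTile i j) ∨
      (∃ y e i : ℤ, 0 ≤ y ∧ y ≤ 1 ∧ 0 ≤ e ∧ e ≤ 1 ∧ y ≤ i ∧ i ≤ n ∧ t = horTile n y e i) ∨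
      (∃ y e i : ℤ, 0 ≤ y ∧ y ≤ 1 ∧ 0 ≤ e ∧ e ≤ 1 ∧ y ≤ i ∧ i ≤ n ∧
        t = hatT (horTile n y e i)) ∨
      (∃ k l r s : ℤ, 0 ≤ k ∧ k ≤ l ∧ l ≤ 1 ∧ 0 ≤ r ∧ r ≤ s ∧ s ≤ 1 ∧
        t = junctionTile n k l r s) := by
  have h2 : (∃ y e i : ℤ, 0 ≤ y ∧ y ≤ 1 ∧ 0 ≤ e ∧ e ≤ 1 ∧ y ≤ i ∧ i ≤ n ∧
      t = hatT (horTile n y e i)) ↔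
      t ∈ hatT '' blueH n ∪ hatT '' greenH n ∪ hatT '' yellowH n ∪ hatT '' antiH n := by
    rw [← Set.image_union, ← Set.image_union, ← Set.image_union]
    constructor
    · rintro ⟨y, e, i, h⟩
      exact ⟨horTile n y e i, mem_hor_iff.2 ⟨y, e, i, by tauto⟩, h.2.2.2.2.2.2.symm⟩
    · rintro ⟨s, hs, rfl⟩
      obtain ⟨y, e, i, h⟩ := mem_hor_iff.1 hs
      exact ⟨y, e, i, by simpa [hatT_eq_iff, hatT_hatT] using h⟩
  have h3 : (∃ k l r s : ℤ, 0 ≤ k ∧ k ≤ l ∧ l ≤ 1 ∧ 0 ≤ r ∧ r ≤ s ∧ s ≤ 1 ∧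
      t = junctionTile n k l r s) ↔ t ∈ junctions n := by
    constructor
    · rintro ⟨k, l, r, s, h⟩
      exact ⟨k, l, r, s, mem_jPairs.2 (by tauto), mem_jPairs.2 (by tauto), by tauto⟩
    · rintro ⟨k, l, r, s, h, h', rfl⟩
      rw [mem_jPairs] at h h'
      exact ⟨k, l, r, s, by tauto⟩
  rw [h2, h3, ← mem_hor_iff]
  have h1 : (∃ i j : ℤ, 1 ≤ i ∧ i ≤ n ∧ 1 ≤ j ∧ j ≤ n ∧ t = whiteTile i j) ↔
    t ∈ whiteTiles n := Iff.rfl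
  rw [h1]
  simp only [Text, Set.mem_union]
  tauto

theorem mem_Tmet_iff {n : ℤ} {t : WangTile Lbl} :
    t ∈ Tmet n ↔
      (∃ i j : ℤ, 1 ≤ i ∧ i ≤ n ∧ 1 ≤ j ∧ j ≤ n ∧ t = whiteTile i j) ∨
      (∃ y e i : ℤ, 0 ≤ y ∧ y ≤ e ∧ e ≤ 1 ∧ y ≤ i ∧ i ≤ n ∧ i < n + e ∧ t = horTile n y e i) ∨
      (∃ y e i : ℤ, 0 ≤ y ∧ y ≤ e ∧ e ≤ 1 ∧ y ≤ i ∧ i ≤ n ∧ i < n + e ∧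
        t = hatT (horTile n y e i)) ∨
      (∃ k l r s : ℤ, 0 ≤ k ∧ k ≤ l ∧ l ≤ 1 ∧ 0 ≤ r ∧ r ≤ s ∧ s ≤ 1 ∧ r ≤ l ∧ k ≤ s ∧
        t = junctionTile n k l r s) := by
  have hA : t ∈ antiH n ↔ ∃ i : ℤ, 1 ≤ i ∧ i ≤ n ∧ t = horTile n 1 0 i := by
    simp [antiH, horTile]
  have hB : t ∈ hatT '' antiH n ↔ ∃ i : ℤ, 1 ≤ i ∧ i ≤ n ∧ t = hatT (horTile n 1 0 i) := by
    constructor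
    · rintro ⟨s, ⟨i, h0, h1, rfl⟩, rfl⟩
      exact ⟨i, h0, h1, by simp [horTile]⟩
    · rintro ⟨i, h0, h1, rfl⟩
      exact ⟨horTile n 1 0 i, ⟨i, h0, h1, by simp [horTile]⟩, rfl⟩
  have hD : t ∈ Dset n ↔ t = horTile n 0 0 n ∨ t = hatT (horTile n 0 0 n) ∨
      t = junctionTile n 0 0 1 1 ∨ t = junctionTile n 1 1 0 0 := by
    simp [Dset, horTile]
  rw [Tmet, Set.mem_sdiff, Set.mem_union, Set.mem_union, hA, hB, hD, mem_Text_iff]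
  constructor
  · rintro ⟨h | ⟨y, e, i, h⟩ | ⟨y, e, i, h⟩ | ⟨k, l, r, s, h⟩, hn⟩
    · exact Or.inl h
    · refine Or.inr (Or.inl ⟨y, e, i, h.1, ?_, h.2.2.2.1, h.2.2.2.2.1, h.2.2.2.2.2.1, ?_,
        h.2.2.2.2.2.2⟩)
      · by_contra hc
        obtain rfl : y = 1 := by omega
        obtain rfl : e = 0 := by omega
        exact hn (Or.inl (Or.inl ⟨i, by tauto⟩))
      · by_contra hc
        obtain rfl : e = 0 := by omega
        obtain rfl : n = i := by omega
        obtain rfl | rfl : y = 0 ∨ y = 1 := by omega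
        · exact hn (Or.inr (Or.inl (by tauto)))
        · exact hn (Or.inl (Or.inl ⟨n, by tauto⟩))
    · refine Or.inr (Or.inr (Or.inl ⟨y, e, i, h.1, ?_, h.2.2.2.1, h.2.2.2.2.1, h.2.2.2.2.2.1, ?_,
        h.2.2.2.2.2.2⟩))
      · by_contra hc
        obtain rfl : y = 1 := by omega
        obtain rfl : e = 0 := by omega
        exact hn (Or.inl (Or.inr ⟨i, by tauto⟩))
      · by_contra hc
        obtain rfl : e = 0 := by omega
        obtain rfl : n = i := by omega
        obtain rfl | rfl : y = 0 ∨ y = 1 := by omega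
        · exact hn (Or.inr (Or.inr (Or.inl (by tauto))))
        · exact hn (Or.inl (Or.inr ⟨n, by tauto⟩))
    · refine Or.inr (Or.inr (Or.inr ⟨k, l, r, s, ?_⟩))
      have : r ≤ l := by
        by_contra hc
        obtain rfl : k = 0 := by omega
        obtain rfl : l = 0 := by omega
        obtain rfl : r = 1 := by omega
        obtain rfl : s = 1 := by omega
        exact hn (Or.inr (Or.inr (Or.inr (Or.inl (by tauto)))))
      have : k ≤ s := by
        by_contra hc
        obtain rfl : r = 0 := by omega
        obtain rfl : s = 0 := by omega
        obtain rfl : k = 1 := by omega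
        obtain rfl : l = 1 := by omega
        exact hn (Or.inr (Or.inr (Or.inr (Or.inr (by tauto)))))
      tauto
  · rintro (⟨i, j, h0, h1, h2, h3, rfl⟩ | ⟨y, e, i, h0, h1, h2, h3, h4, h5, rfl⟩ |
      ⟨y, e, i, h0, h1, h2, h3, h4, h5, rfl⟩ | ⟨k, l, r, s, h0, h1, h2, h3, h4, h5, h6, h7, rfl⟩)
    · refine ⟨Or.inl ⟨i, j, h0, h1, h2, h3, rfl⟩, ?_⟩
      simp [whiteTile, horTile, hatT, junctionTile]
    · refine ⟨Or.inr (Or.inl ⟨y, e, i, by omega, by omega, by omega, by omega, h3, h4, rfl⟩), ?_⟩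
      simp [horTile, hatT, junctionTile]
      omega
    · refine ⟨Or.inr (Or.inr (Or.inl ⟨y, e, i, by omega, by omega, by omega, by omega, h3, h4,
        rfl⟩)), ?_⟩
      simp [horTile, hatT, junctionTile]
      omega
    · refine ⟨Or.inr (Or.inr (Or.inr ⟨k, l, r, s, h0, h1, h2, h3, h4, h5, rfl⟩)), ?_⟩
      simp [horTile, hatT, junctionTile]
      omega

theorem Tmet_subset_Text (n : ℤ) : Tmet n ⊆ Text n := Set.sdiff_subset

theorem hatT_mem_Tmet {n : ℤ} {t : WangTile Lbl} (h : t ∈ Tmet n) : hatT t ∈ Tmet n := by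
  rw [mem_Tmet_iff] at h ⊢
  obtain ⟨i, j, h0, h1, h2, h3, rfl⟩ | ⟨y, e, i, h⟩ | ⟨y, e, i, h⟩ | ⟨k, l, r, s, h⟩ := h
  · exact Or.inl ⟨j, i, h2, h3, h0, h1, rfl⟩
  · exact Or.inr (Or.inr (Or.inl ⟨y, e, i, by simp only [h, true_and]⟩))
  · exact Or.inr (Or.inl ⟨y, e, i, by simp only [h, true_and]; simp [hatT_hatT]⟩)
  · refine Or.inr (Or.inr (Or.inr ⟨r, s, k, l, ?_⟩))
    simp only [h, true_and]; simp [hatT, junctionTile]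

/-- A tile of `Tmet n` is determined by its left and bottom labels. -/
theorem Tmet_det {n : ℤ} {s t : WangTile Lbl} (hs : s ∈ Tmet n) (ht : t ∈ Tmet n)
    (hl : s.left = t.left) (hb : s.bottom = t.bottom) : s = t := by
  rw [mem_Tmet_iff] at hs ht
  rw [WangTile.ext_iff']
  refine ⟨?_, ?_, hl, hb⟩ <;>
  obtain ⟨i, j, h0, h1, h2, h3, rfl⟩ | ⟨y, e, i, h0, h1, h2, h3, h4, h5, rfl⟩ |
      ⟨y, e, i, h0, h1, h2, h3, h4, h5, rfl⟩ | ⟨k, l, r, s, h0, h1, h2, h3, h4, h5, h6, h7, rfl⟩ := hs <;>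
  obtain ⟨i', j', h0', h1', h2', h3', rfl⟩ | ⟨y', e', i', h0', h1', h2', h3', h4', h5', rfl⟩ |
      ⟨y', e', i', h0', h1', h2', h3', h4', h5', rfl⟩ | ⟨k', l', r', s', h0', h1', h2', h3', h4', h5', h6', h7', rfl⟩ := ht <;>
  simp [whiteTile, horTile, hatT, junctionTile] at hl hb ⊢ <;> omega

/-- The arithmetic content of a valid configuration over `Text n`: `ρ j` and `γ i` are the first
coordinates of the labels in row `j` and column `i`, and `l2, l3` and `b2, b3` are the other two
coordinates of the left and bottom labels. -/
structure Grid (n : ℤ) (γ ρ : ℤ → ℤ) (l2 l3 b2 b3 : ℤ → ℤ → ℤ) : Prop where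
  col : ∀ i, γ i = 0 ∨ γ i = 1
  row : ∀ j, ρ j = 0 ∨ ρ j = 1
  white : ∀ i j, γ i = 1 → ρ j = 1 →
    l2 i j = 1 ∧ b2 i j = 1 ∧ l2 (i + 1) j = 1 ∧ b2 i (j + 1) = 1 ∧
    l3 (i + 1) j = l3 i j + 1 ∧ b3 i (j + 1) = b3 i j + 1 ∧
    1 ≤ l3 i j ∧ l3 i j ≤ n ∧ 1 ≤ b3 i j ∧ b3 i j ≤ n
  hor : ∀ i j, γ i = 1 → ρ j = 0 →
    b2 i j = 1 ∧ b2 i (j + 1) = 1 ∧ l3 (i + 1) j = l3 i j + 1 ∧ b3 i j = n + l2 (i + 1) j ∧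
    b3 i (j + 1) = 1 + l2 i j ∧ 0 ≤ l2 i j ∧ l2 i j ≤ 1 ∧ 0 ≤ l2 (i + 1) j ∧
    l2 (i + 1) j ≤ 1 ∧ l2 i j ≤ l3 i j ∧ l3 i j ≤ n
  ver : ∀ i j, γ i = 0 → ρ j = 1 →
    l2 i j = 1 ∧ l2 (i + 1) j = 1 ∧ b3 i (j + 1) = b3 i j + 1 ∧ l3 i j = n + b2 i (j + 1) ∧
    l3 (i + 1) j = 1 + b2 i j ∧ 0 ≤ b2 i j ∧ b2 i j ≤ 1 ∧ 0 ≤ b2 i (j + 1) ∧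
    b2 i (j + 1) ≤ 1 ∧ b2 i j ≤ b3 i j ∧ b3 i j ≤ n
  junc : ∀ i j, γ i = 0 → ρ j = 0 →
    l2 i j = b3 i (j + 1) ∧ l3 i j = b2 i (j + 1) + n ∧ b2 i j = l3 (i + 1) j ∧
    b3 i j = l2 (i + 1) j + n ∧ 0 ≤ l2 (i + 1) j ∧ l2 (i + 1) j ≤ l3 (i + 1) j ∧
    l3 (i + 1) j ≤ 1 ∧ 0 ≤ b2 i (j + 1) ∧ b2 i (j + 1) ≤ b3 i (j + 1) ∧ b3 i (j + 1) ≤ 1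

/-- `a` and `a + w` are consecutive zeros of `f`. -/
def Gap (f : ℤ → ℤ) (a w : ℤ) : Prop :=
  1 ≤ w ∧ f a = 0 ∧ f (a + w) = 0 ∧ ∀ p, 1 ≤ p → p < w → f (a + p) = 1

namespace Grid

variable {n : ℤ} {γ ρ : ℤ → ℤ} {l2 l3 b2 b3 : ℤ → ℤ → ℤ}

theorem swap (g : Grid n γ ρ l2 l3 b2 b3) :
    Grid n ρ γ (fun i j => b2 j i) (fun i j => b3 j i) (fun i j => l2 j i)
      (fun i j => l3 j i) where
  col := g.row
  row := g.col
  white i j h h' := by have := g.white j i h' h; tauto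
  hor i j h h' := g.ver j i h' h
  ver i j h h' := g.hor j i h' h
  junc i j h h' := by have := g.junc j i h' h; omega

theorem l3_add (g : Grid n γ ρ l2 l3 b2 b3) {i j : ℤ} {p : ℕ}
    (h : ∀ q : ℤ, 0 ≤ q → q < p → γ (i + q) = 1) : l3 (i + p) j = l3 i j + p := by
  induction p with
  | zero => simp
  | succ p ih =>
    have h1 := ih fun q h0 h1 => h q h0 (by push_cast; omega)
    have h2 := h p (by omega) (by push_cast; omega)
    have h3 : l3 (i + p + 1) j = l3 (i + p) j + 1 := by
      rcases g.row j with h0 | h0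
      · have := g.hor _ _ h2 h0; tauto
      · have := g.white _ _ h2 h0; tauto
    push_cast
    rw [← add_assoc, h3, h1]; ring

theorem exists_col (hn : 1 ≤ n) (g : Grid n γ ρ l2 l3 b2 b3) (i : ℤ) :
    ∃ q : ℤ, 0 ≤ q ∧ q ≤ n + 1 ∧ γ (i + q) = 0 := by
  by_contra! hc
  have h1 : ∀ q : ℤ, 0 ≤ q → q ≤ n + 1 → γ (i + q) = 1 := fun q h0 h1 =>
    (g.col _).resolve_left (hc q h0 h1)
  have h2 := g.l3_add (i := i) (j := 0) (p := (n + 1).toNat)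
    fun q h0 h2 => h1 q h0 (by omega)
  rw [Int.toNat_of_nonneg (by omega)] at h2
  have h3 := h1 0 (by omega) (by omega)
  rw [add_zero] at h3
  have h4 := h1 (n + 1) (by omega) (by omega)
  rcases g.row 0 with h0 | h0
  · have := g.hor _ _ h3 h0
    have := g.hor _ _ h4 h0
    omega
  · have := g.white _ _ h3 h0
    have := g.white _ _ h4 h0
    omega

theorem exists_row_one (hn : 1 ≤ n) (g : Grid n γ ρ l2 l3 b2 b3) : ∃ j, ρ j = 1 := by
  by_contra! hc
  have h0 : ∀ j, ρ j = 0 := fun j => (g.row j).resolve_right (hc j)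
  obtain ⟨q, -, -, hq⟩ := g.exists_col hn 0
  have key : ∀ i, γ i = 0 → ∀ j, l2 i j = 1 ∧ l2 (i + 1) j = 0 := by
    intro i hi j
    have h1 := g.junc i j hi (h0 _)
    have h2 := g.junc i (j + 1) hi (h0 _)
    have h3 := g.junc i (j - 1) hi (h0 _)
    rw [sub_add_cancel] at h3
    omega
  have h1 : ∀ p : ℕ, ∀ j, l2 (0 + q + 1 + p) j = 0 := by
    intro p
    induction p with
    | zero => intro j; simpa using (key _ hq j).2
    | succ p ih =>
      have h1 : γ (0 + q + 1 + p) = 1 := by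
        rcases g.col (0 + q + 1 + p) with h | h
        · have := key _ h 0
          have := ih 0
          omega
        · exact h
      intro j
      have h2 := g.hor _ j h1 (h0 _)
      have h3 := g.hor _ (j - 1) h1 (h0 _)
      rw [sub_add_cancel] at h3
      have := ih (j - 1)
      push_cast
      rw [← add_assoc]
      omega
  obtain ⟨q', hq', -, h2⟩ := g.exists_col hn (0 + q + 1)
  have h3 := h1 q'.toNat 0
  rw [Int.toNat_of_nonneg hq'] at h3
  have := key _ h2 0
  omega

theorem gap_one (g : Grid n γ ρ l2 l3 b2 b3) {a w j : ℤ} (h : Gap γ a w) (hj : ρ j = 1) :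
    b2 a j + w = n + b2 (a + w) (j + 1) := by
  obtain ⟨hw, ha, hb, hp⟩ := h
  have h1 := g.l3_add (i := a + 1) (j := j) (p := (w - 1).toNat) fun q h0 h1 => by
    rw [add_assoc]; exact hp _ (by omega) (by omega)
  rw [Int.toNat_of_nonneg (by omega), show a + 1 + (w - 1) = a + w by ring] at h1
  have := g.ver _ _ ha hj
  have := g.ver _ _ hb hj
  omega

theorem gap_zero (g : Grid n γ ρ l2 l3 b2 b3) {a w j : ℤ} (h : Gap γ a w) (hj : ρ j = 0) :
    b2 a j + w - 1 = n + b2 (a + w) (j + 1) := by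
  obtain ⟨hw, ha, hb, hp⟩ := h
  have h1 := g.l3_add (i := a + 1) (j := j) (p := (w - 1).toNat) fun q h0 h1 => by
    rw [add_assoc]; exact hp _ (by omega) (by omega)
  rw [Int.toNat_of_nonneg (by omega), show a + 1 + (w - 1) = a + w by ring] at h1
  have := g.junc _ _ ha hj
  have := g.junc _ _ hb hj
  omega

theorem b2_mem (g : Grid n γ ρ l2 l3 b2 b3) (i j : ℤ) : 0 ≤ b2 i j ∧ b2 i j ≤ 1 := by
  rcases g.col i with hi | hi <;> rcases g.row j with hj | hj
  · have := g.junc _ _ hi hj; omega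
  · have := g.ver _ _ hi hj; omega
  · have := g.hor _ _ hi hj; omega
  · have := g.white _ _ hi hj; omega

theorem gap_width (hn : 1 ≤ n) (g : Grid n γ ρ l2 l3 b2 b3) {a w : ℤ} (h : Gap γ a w) :
    w = n ∨ w = n + 1 := by
  obtain ⟨j, hj⟩ := g.exists_row_one hn
  obtain ⟨j', -, -, hj'⟩ := g.swap.exists_col hn 0
  have := g.gap_one h hj
  have := g.gap_zero h hj'
  have := g.b2_mem a j
  have := g.b2_mem a (0 + j')
  have := g.b2_mem (a + w) (j + 1)
  have := g.b2_mem (a + w) (0 + j' + 1)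
  omega

end Grid

/-- Below every integer there is a nearest zero, if zeros are syndetic. -/
theorem exists_gap_left {f : ℤ → ℤ} (hf : ∀ i, f i = 0 ∨ f i = 1) {N : ℤ}
    (h : ∀ i, ∃ q, 0 ≤ q ∧ q ≤ N ∧ f (i + q) = 0) (i : ℤ) :
    ∃ a, a < i ∧ f a = 0 ∧ ∀ p, a < p → p < i → f p = 1 := by
  obtain ⟨q, h0, h1, h2⟩ := h (i - 1 - N)
  have H : ∃ p : ℕ, f (i - 1 - p) = 0 :=
    ⟨(N - q).toNat, by rw [Int.toNat_of_nonneg (by omega)]; rw [← h2]; congr 1; ring⟩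
  classical
  refine ⟨i - 1 - Nat.find H, by omega, Nat.find_spec H, fun p hp hp' => ?_⟩
  refine (hf p).resolve_left fun hc => Nat.find_min H (m := (i - 1 - p).toNat) (by omega) ?_
  rw [Int.toNat_of_nonneg (by omega)]; rw [← hc]; congr 1; ring

theorem exists_gap_right {f : ℤ → ℤ} (hf : ∀ i, f i = 0 ∨ f i = 1) {N : ℤ}
    (h : ∀ i, ∃ q, 0 ≤ q ∧ q ≤ N ∧ f (i + q) = 0) (i : ℤ) :
    ∃ a, i < a ∧ f a = 0 ∧ ∀ p, i < p → p < a → f p = 1 := by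
  obtain ⟨q, h0, h1, h2⟩ := h (i + 1)
  have H : ∃ p : ℕ, f (i + 1 + p) = 0 :=
    ⟨q.toNat, by rw [Int.toNat_of_nonneg (by omega)]; rw [← h2]⟩
  classical
  refine ⟨i + 1 + Nat.find H, by omega, Nat.find_spec H, fun p hp hp' => ?_⟩
  refine (hf p).resolve_left fun hc => Nat.find_min H (m := (p - i - 1).toNat) (by omega) ?_
  rw [Int.toNat_of_nonneg (by omega)]; rw [← hc]; congr 1; ring

theorem gap_of_forall {f : ℤ → ℤ} {a b : ℤ} (hab : a < b) (ha : f a = 0) (hb : f b = 0)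
    (h : ∀ p, a < p → p < b → f p = 1) : Gap f a (b - a) :=
  ⟨by omega, ha, by rw [add_sub_cancel]; exact hb, fun p h0 h1 => h _ (by omega) (by omega)⟩

namespace Grid

variable {n : ℤ} {γ ρ : ℤ → ℤ} {l2 l3 b2 b3 : ℤ → ℤ → ℤ}

theorem not_anti (hn : 1 ≤ n) (g : Grid n γ ρ l2 l3 b2 b3) {i j : ℤ} (hi : γ i = 1)
    (hj : ρ j = 0) : l2 i j ≤ l2 (i + 1) j := by
  obtain ⟨a, hai, ha, hp⟩ := exists_gap_left g.col (g.exists_col hn) i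
  have key : ∀ p : ℕ, ∀ i, i = a + 1 + p → (∀ q, a < q → q ≤ i → γ q = 1) → ∀ j, ρ j = 0 →
      l2 i j ≤ l2 (i + 1) j := by
    intro p
    induction p with
    | zero =>
      intro i hi h j hj
      by_contra hc
      obtain ⟨r, hr, hr0, hr1⟩ := exists_gap_left g.row (g.swap.exists_col hn) j
      have hg := gap_of_forall hr hr0 hj hr1
      have h1 := g.swap.gap_one hg (h i (by omega) (by omega))
      have h2 := g.swap.gap_zero hg ha
      have h3 := g.swap.gap_width hn hg
      have := g.swap.b2_mem r i
      have := g.swap.b2_mem r a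
      have := g.swap.b2_mem j i
      have := g.swap.b2_mem j (i + 1)
      rw [add_sub_cancel, show a + 1 = i by omega] at h2
      rw [add_sub_cancel] at h1
      omega
    | succ p ih =>
      intro i hi h j hj
      by_contra hc
      obtain ⟨r, hr, hr0, hr1⟩ := exists_gap_left g.row (g.swap.exists_col hn) j
      have hg := gap_of_forall hr hr0 hj hr1
      push_cast at hi
      have h1 := g.swap.gap_one hg (h i (by omega) (by omega))
      have h2 := g.swap.gap_one hg (h (i - 1) (by omega) (by omega))
      have h3 := g.swap.gap_width hn hg
      have := g.swap.b2_mem r i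
      have := g.swap.b2_mem r (i - 1)
      have := g.swap.b2_mem j i
      have := g.swap.b2_mem j (i + 1)
      rw [add_sub_cancel, sub_add_cancel] at h2
      rw [add_sub_cancel] at h1
      have h4 := ih (i - 1) (by omega) (fun q h0 h1 => h q h0 (by omega)) r hr0
      rw [sub_add_cancel] at h4
      omega
  refine key (i - a - 1).toNat i (by omega) (fun q h0 h1 => ?_) j hj
  rcases eq_or_lt_of_le h1 with rfl | h1
  · exact hi
  · exact hp q h0 h1

theorem not_blue_top (g : Grid n γ ρ l2 l3 b2 b3) {i j : ℤ} (hi : γ i = 1)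
    (hj : ρ j = 0) : l3 i j < n + l2 (i + 1) j := by
  have h1 := g.hor _ _ hi hj
  rcases g.col (i + 1) with h | h
  · have := g.junc _ _ h hj; omega
  · have := g.hor _ _ h hj; omega

theorem junc_le (hn : 1 ≤ n) (g : Grid n γ ρ l2 l3 b2 b3) {i j : ℤ} (hi : γ i = 0)
    (hj : ρ j = 0) : b2 i (j + 1) ≤ b2 i j := by
  by_contra hc
  obtain ⟨a, hai, ha, hp⟩ := exists_gap_right g.col (g.exists_col hn) i
  have hg := gap_of_forall hai hi ha hp
  have h1 := g.gap_zero hg hj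
  have h2 := g.gap_width hn hg
  have := g.b2_mem i j
  have := g.b2_mem i (j + 1)
  have := g.b2_mem (i + (a - i)) (j + 1)
  have := g.b2_mem (i + (a - i)) (j + 1 + 1)
  rcases g.row (j + 1) with h | h
  · have h3 := g.gap_zero hg h
    have h4 : n = 1 := by
      have := g.swap.gap_width hn (gap_of_forall (lt_add_one j) hj h (by intros; omega))
      omega
    obtain rfl : a = i + 1 + 1 := by omega
    have h5 := hp (i + 1) (by omega) (by omega)
    have h6 := g.hor _ _ h5 hj
    have h7 := g.hor _ _ h5 h
    have h8 := g.junc _ _ hi hj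
    have h9 := g.junc _ _ ha h
    have h10 := g.junc _ _ hi h
    rw [show i + (i + 1 + 1 - i) = i + 1 + 1 by omega] at *
    omega
  · have h3 := g.gap_one hg h
    omega

end Grid

section

variable {n : ℤ} {x : ℤ × ℤ → WangTile Lbl}

theorem Text_fst {t : WangTile Lbl} (h : t ∈ Text n) :
    t.right.1 = t.left.1 ∧ t.top.1 = t.bottom.1 := by
  rw [mem_Text_iff] at h
  obtain ⟨i, j, h0, h1, h2, h3, rfl⟩ | ⟨y, e, i, h0, h1, h2, h3, h4, h5, rfl⟩ |
      ⟨y, e, i, h0, h1, h2, h3, h4, h5, rfl⟩ | ⟨k, l, r, s, h0, h1, h2, h3, h4, h5, rfl⟩ := h <;>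
  simp [whiteTile, horTile, hatT, junctionTile]

theorem eq_of_succ_eq {α : Type*} {f : ℤ → α} (h : ∀ i, f (i + 1) = f i) (i : ℤ) : f i = f 0 := by
  induction i using Int.induction_on with
  | zero => rfl
  | succ i ih => rw [h, ih]
  | pred i ih => rw [← ih, ← h (-i - 1), sub_add_cancel]

theorem left_fst (hx : ValidConfig (Text n) x) (i j : ℤ) :
    (x (i, j)).left.1 = (x (0, j)).left.1 :=
  eq_of_succ_eq (f := fun i => (x (i, j)).left.1) (fun i => by
    rw [← (Text_fst (hx.1 (i, j))).1, hx.2.1 (i, j)]) i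

theorem bottom_fst (hx : ValidConfig (Text n) x) (i j : ℤ) :
    (x (i, j)).bottom.1 = (x (i, 0)).bottom.1 :=
  eq_of_succ_eq (f := fun j => (x (i, j)).bottom.1) (fun j => by
    rw [← (Text_fst (hx.1 (i, j))).2, hx.2.2 (i, j)]) j

theorem grid_of_valid (hx : ValidConfig (Text n) x) :
    Grid n (fun i => (x (i, 0)).bottom.1) (fun j => (x (0, j)).left.1)
      (fun i j => (x (i, j)).left.2.1) (fun i j => (x (i, j)).left.2.2)
      (fun i j => (x (i, j)).bottom.2.1) (fun i j => (x (i, j)).bottom.2.2) := by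
  constructor
  · intro i
    have h := mem_Text_iff.1 (hx.1 (i, 0))
    obtain ⟨i, j, h0, h1, h2, h3, h⟩ | ⟨y, e, i, h0, h1, h2, h3, h4, h5, h⟩ |
      ⟨y, e, i, h0, h1, h2, h3, h4, h5, h⟩ | ⟨k, l, r, s, h0, h1, h2, h3, h4, h5, h⟩ := h <;>
    simp [h, whiteTile, horTile, hatT, junctionTile]
  · intro j
    have h := mem_Text_iff.1 (hx.1 (0, j))
    obtain ⟨i, j, h0, h1, h2, h3, h⟩ | ⟨y, e, i, h0, h1, h2, h3, h4, h5, h⟩ |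
      ⟨y, e, i, h0, h1, h2, h3, h4, h5, h⟩ | ⟨k, l, r, s, h0, h1, h2, h3, h4, h5, h⟩ := h <;>
    simp [h, whiteTile, horTile, hatT, junctionTile]
  all_goals
    intro i j hi hj
    rw [← bottom_fst hx i j] at hi
    rw [← left_fst hx i j] at hj
    have hr := hx.2.1 (i, j)
    have ht := hx.2.2 (i, j)
    dsimp only at hr ht
    rw [← hr, ← ht]
    have h := mem_Text_iff.1 (hx.1 (i, j))
    obtain ⟨i, j, h0, h1, h2, h3, h⟩ | ⟨y, e, i, h0, h1, h2, h3, h4, h5, h⟩ |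
      ⟨y, e, i, h0, h1, h2, h3, h4, h5, h⟩ | ⟨k, l, r, s, h0, h1, h2, h3, h4, h5, h⟩ := h <;>
    simp [h, whiteTile, horTile, hatT, junctionTile] at hi hj ⊢
    all_goals omega

theorem valid_Tmet_of_Text (hn : 1 ≤ n) (hx : ValidConfig (Text n) x) :
    ValidConfig (Tmet n) x := by
  refine ⟨fun m => ?_, hx.2⟩
  have g := grid_of_valid hx
  have hi := bottom_fst hx m.1 m.2
  have hj := left_fst hx m.1 m.2
  have hr := hx.2.1 m
  have ht := hx.2.2 m
  rw [mem_Tmet_iff]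
  obtain ⟨i, j, h⟩ | ⟨y, e, i, h0, h1, h2, h3, h4, h5, h⟩ |
      ⟨y, e, i, h0, h1, h2, h3, h4, h5, h⟩ | ⟨k, l, r, s, h0, h1, h2, h3, h4, h5, h⟩ :=
    mem_Text_iff.1 (hx.1 m)
  · exact Or.inl ⟨i, j, h⟩
  · refine Or.inr (Or.inl ⟨y, e, i, h0, ?_, h3, h4, h5, ?_, h⟩)
    · have := g.not_anti hn (i := m.1) (j := m.2) (by rw [← hi]; simp [h, horTile])
        (by rw [← hj]; simp [h, horTile])
      rw [← hr] at this
      simpa [h, horTile] using this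
    · have := g.not_blue_top (i := m.1) (j := m.2) (by rw [← hi]; simp [h, horTile])
        (by rw [← hj]; simp [h, horTile])
      rw [← hr] at this
      simpa [h, horTile] using this
  · refine Or.inr (Or.inr (Or.inl ⟨y, e, i, h0, ?_, h3, h4, h5, ?_, h⟩))
    · have := g.swap.not_anti hn (i := m.2) (j := m.1) (by rw [← hj]; simp [h, horTile, hatT])
        (by rw [← hi]; simp [h, horTile, hatT])
      rw [← ht] at this
      simpa [h, horTile, hatT] using this
    · have := g.swap.not_blue_top (i := m.2) (j := m.1) (by rw [← hj]; simp [h, horTile, hatT])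
        (by rw [← hi]; simp [h, horTile, hatT])
      rw [← ht] at this
      simpa [h, horTile, hatT] using this
  · refine Or.inr (Or.inr (Or.inr ⟨k, l, r, s, h0, h1, h2, h3, h4, h5, ?_, ?_, h⟩))
    · have := g.junc_le hn (i := m.1) (j := m.2) (by rw [← hi]; simp [h, junctionTile])
        (by rw [← hj]; simp [h, junctionTile])
      rw [← ht] at this
      simpa [h, junctionTile] using this
    · have := g.swap.junc_le hn (i := m.2) (j := m.1) (by rw [← hj]; simp [h, junctionTile])
        (by rw [← hi]; simp [h, junctionTile])
      rw [← hr] at this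
      simpa [h, junctionTile] using this

end

/-- `f` is `0` on `[0, t)` and `1` on `[t, h)`. -/
def StepAt (f : ℤ → ℤ) (h t : ℤ) : Prop :=
  0 ≤ t ∧ t ≤ h ∧ ∀ j, 0 ≤ j → j < h → (t ≤ j ∧ f j = 1) ∨ (j < t ∧ f j = 0)

theorem exists_stepAt {f : ℤ → ℤ} (h : ℕ) (hf : ∀ j, f j = 0 ∨ f j = 1)
    (hm : ∀ j : ℤ, 0 ≤ j → j + 1 < h → f j ≤ f (j + 1)) : ∃ t, StepAt f h t := by
  induction h with
  | zero => exact ⟨0, le_rfl, by simp, fun j h0 h1 => by simp at h1; omega⟩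
  | succ h ih =>
    obtain ⟨t, h0, h1, h2⟩ := ih fun j h0 h1 => hm j h0 (by push_cast; omega)
    rcases hf h with h3 | h3
    · refine ⟨h + 1, by omega, by simp, fun j h4 h5 => Or.inr ⟨by push_cast at h5; omega, ?_⟩⟩
      push_cast at h5
      rcases eq_or_lt_of_le (Int.lt_add_one_iff.1 h5) with rfl | h6
      · exact h3
      · have h7 := h2 j h4 h6
        have h8 := h2 (h - 1) (by omega) (by omega)
        have h9 := hm (h - 1) (by omega) (by push_cast; omega)
        rw [sub_add_cancel] at h9
        omega
    · refine ⟨t, h0, by push_cast; omega, fun j h4 h5 => ?_⟩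
      push_cast at h5
      rcases eq_or_lt_of_le (Int.lt_add_one_iff.1 h5) with rfl | h6
      · exact Or.inl ⟨h1, h3⟩
      · exact h2 j h4 h6

namespace Grid

variable {n : ℤ} {γ ρ : ℤ → ℤ} {l2 l3 b2 b3 : ℤ → ℤ → ℤ}

theorem exists_step (hn : 1 ≤ n) (g : Grid n γ ρ l2 l3 b2 b3) {a b h : ℤ} (ha : γ a = 0)
    (hb : Gap ρ b h) : ∃ t, StepAt (fun j => b2 a (b + 1 + j)) h t := by
  have := exists_stepAt (f := fun j => b2 a (b + 1 + j)) h.toNat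
    (fun j => by have := g.b2_mem a (b + 1 + j); omega) (fun j h0 h1 => by
      have := g.swap.not_anti hn (i := b + 1 + j) (j := a)
        (by rw [add_assoc]; exact hb.2.2.2 _ (by omega) (by omega)) ha
      rw [← add_assoc]
      exact this)
  rwa [Int.toNat_of_nonneg (by have := hb.1; omega)] at this

/-- How a block transports the data of its left side to its right side. -/
theorem block (hn : 1 ≤ n) (g : Grid n γ ρ l2 l3 b2 b3) {a w b h t t' : ℤ} (ha : Gap γ a w)
    (hb : Gap ρ b h) (ht : StepAt (fun j => b2 a (b + 1 + j)) h t)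
    (ht' : StepAt (fun j => b2 (a + w) (b + 1 + j)) h t') :
    (w = n ∧ b2 a b = 1 ∧ t + 1 ≤ h ∧ t' = t + 1 ∨
      w = n + 1 ∧ h ≤ t + 1 ∧ t' = 1 - b2 a b) ∧ b2 a (b + h) = (if t < h then 1 else 0) ∧
    1 - l2 a b ≤ t ∧ 1 - l2 (a + w) b ≤ t' := by
  have hg := g.gap_width hn ha
  have h0 := g.gap_zero ha hb.2.1
  have h1 : ∀ j, 1 ≤ j → j < h → b2 a (b + 1 + (j - 1)) + w = n + b2 (a + w) (b + 1 + j) := by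
    intro j hj hj'
    have := g.gap_one ha (hb.2.2.2 j hj hj')
    rwa [show b + 1 + (j - 1) = b + j by ring, show b + 1 + j = b + j + 1 by ring]
  have h2 := g.gap_zero ha hb.2.2.1
  have m1 := g.b2_mem a b
  have m2 := g.b2_mem a (b + h)
  have m3 := g.b2_mem (a + w) (b + 1)
  have m4 := g.b2_mem (a + w) (b + h + 1)
  obtain ⟨ht0, ht1, ht2⟩ := ht
  obtain ⟨ht0', ht1', ht2'⟩ := ht'
  dsimp only at ht2 ht2'
  have h3 := ht2 (h - 1) (by have := hb.1; omega) (by omega)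
  rw [show b + 1 + (h - 1) = b + h by ring] at h3
  have h4 := ht2' 0 le_rfl (by have := hb.1; omega)
  have h4' := ht2 0 le_rfl (by have := hb.1; omega)
  rw [add_zero] at h4 h4'
  have j1 := g.junc _ _ ha.2.1 hb.2.1
  have j2 := g.junc _ _ ha.2.2.1 hb.2.1
  refine ⟨?_, by split_ifs <;> omega, by omega, by omega⟩
  rcases hg with rfl | rfl
  · refine Or.inl ⟨rfl, by omega, by omega, ?_⟩
    by_contra hc
    rcases lt_or_gt_of_ne hc with hc | hc
    · have h5 := ht2' t ht0 (by omega)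
      rcases eq_or_lt_of_le ht0 with rfl | h6
      · rw [add_zero] at h5; omega
      · have h7 := ht2 (t - 1) (by omega) (by omega)
        have h8 := h1 t (by omega) (by omega)
        omega
    · have h5 := ht2' (t + 1) (by omega) (by omega)
      have h7 := ht2 t (by omega) (by omega)
      have h8 := h1 (t + 1) (by omega) (by omega)
      rw [add_sub_cancel_right] at h8
      omega
  · refine Or.inr ⟨rfl, ?_, ?_⟩
    · by_contra hc
      have h7 := ht2 t (by omega) (by omega)
      have h8 := h1 (t + 1) (by omega) (by omega)
      have := g.b2_mem (a + (n + 1)) (b + 1 + (t + 1))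
      rw [add_sub_cancel_right] at h8
      omega
    · by_contra hc
      have h5 : ¬ (1 < h ∧ 1 < t') := by
        rintro ⟨h5, h6⟩
        have h7 := ht2' 1 (by omega) (by omega)
        have h8 := h1 1 (by omega) (by omega)
        have := g.b2_mem a (b + 1 + (1 - 1))
        omega
      omega

end Grid

/-- A relation that is total in both directions has a bi-infinite path. -/
theorem exists_int_path {α : Type*} [Nonempty α] {R : α → α → Prop} (h1 : ∀ a, ∃ b, R a b)
    (h2 : ∀ b, ∃ a, R a b) : ∃ c : ℤ → α, ∀ k, R (c k) (c (k + 1)) := by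
  choose s hs using h1
  choose p hp using h2
  obtain ⟨a⟩ := ‹Nonempty α›
  refine ⟨fun k => match k with
    | Int.ofNat m => s^[m] a
    | Int.negSucc m => p^[m + 1] a, fun k => ?_⟩
  match k with
  | Int.ofNat m =>
    change R (s^[m] a) (s^[m + 1] a)
    rw [Function.iterate_succ_apply']
    exact hs _
  | Int.negSucc 0 => exact hp a
  | Int.negSucc (m + 1) =>
    change R (p^[m + 1 + 1] a) (p^[m + 1] a)
    rw [Function.iterate_succ_apply']
    exact hp _

theorem exists_gaps {f : ℤ → ℤ} (hf : ∀ i, f i = 0 ∨ f i = 1) {N : ℤ}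
    (h : ∀ i, ∃ q, 0 ≤ q ∧ q ≤ N ∧ f (i + q) = 0) :
    ∃ c : ℤ → ℤ, ∀ k, Gap f (c k) (c (k + 1) - c k) := by
  obtain ⟨q, -, -, hq⟩ := h 0
  have : Nonempty {a // f a = 0} := ⟨⟨_, hq⟩⟩
  obtain ⟨c, hc⟩ := exists_int_path (α := {a // f a = 0}) (R := fun a b => Gap f a (b - a))
    (fun a => by
      obtain ⟨b, h1, h2, h3⟩ := exists_gap_right hf h a
      exact ⟨⟨b, h2⟩, gap_of_forall h1 a.2 h2 h3⟩)
    (fun b => by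
      obtain ⟨a, h1, h2, h3⟩ := exists_gap_left hf h b
      exact ⟨⟨a, h2⟩, gap_of_forall h1 h2 b.2 h3⟩)
  exact ⟨fun k => c k, hc⟩

/-- The `j`-th letter of `tau n u`. -/
def letter (n : ℤ) (u : Lbl) (j : ℤ) : Lbl :=
  if j = 0 then (0, u.1 - u.2.1 + 1, if u.2.2 - u.1 ≤ 0 then n + 1 else n)
  else (1, 1, if u.2.2 - u.1 ≤ j then n + 1 else n)

/-- `x` is the image of `y` under the substitution, the block of the tile `y (k, l)` having its
bottom left corner at `(c k, r l)`. -/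
structure Desub (n : ℤ) (x y : ℤ × ℤ → WangTile Lbl) (c r : ℤ → ℤ) : Prop where
  valid : ValidConfig (Tmet n) x
  valid' : ValidConfig (Tmet n) y
  col : ∀ k l, c (k + 1) = c k + (n + 1 - (y (k, l)).bottom.1)
  row : ∀ k l, r (l + 1) = r l + (n + 1 - (y (k, l)).left.1)
  left : ∀ k l j, 0 ≤ j → r l + j < r (l + 1) →
    (x (c k, r l + j)).left = letter n (y (k, l)).left j
  bottom : ∀ k l i, 0 ≤ i → c k + i < c (k + 1) →
    (x (c k + i, r l)).bottom = letter n (y (k, l)).bottom i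

theorem ValidConfig.mono {C : Type*} {S T : Set (WangTile C)} (h : S ⊆ T)
    {x : ℤ × ℤ → WangTile C} (hx : ValidConfig S x) : ValidConfig T x :=
  ⟨fun m => h (hx.1 m), hx.2⟩

theorem mem_Text_of_block {n w h y z y' z' a b a' b' : ℤ}
    (hy : 0 ≤ y ∧ y ≤ 1) (hy' : 0 ≤ y' ∧ y' ≤ 1)
    (h1 : w = n ∧ y' = 1 ∧ z + 1 ≤ h ∧ a' = z + 1 ∨ w = n + 1 ∧ h ≤ z + 1 ∧ a' = 1 - y')
    (h2 : h = n ∧ y = 1 ∧ z' + 1 ≤ w ∧ b' = z' + 1 ∨ h = n + 1 ∧ w ≤ z' + 1 ∧ b' = 1 - y)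
    (hz : 0 ≤ z ∧ z ≤ h) (hz' : 0 ≤ z' ∧ z' ≤ w)
    (ha : a = if z' < w then 1 else 0) (hb : b = if z < h then 1 else 0)
    (k1 : 1 - y ≤ z) (k2 : 1 - y' ≤ z') (k3 : 1 - a ≤ a') (k4 : 1 - b ≤ b') :
    (⟨(n + 1 - h, n + 2 - h - a, n + 1 - h + a'), (n + 1 - w, n + 2 - w - b, n + 1 - w + b'),
      (n + 1 - h, n + 2 - h - y, n + 1 - h + z),
      (n + 1 - w, n + 2 - w - y', n + 1 - w + z')⟩ : WangTile Lbl) ∈ Text n := by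
  rw [mem_Text_iff]
  rcases h1 with ⟨rfl, rfl, h3, rfl⟩ | ⟨rfl, h3, rfl⟩ <;>
    rcases h2 with ⟨h4, rfl, h5, rfl⟩ | ⟨rfl, h5, rfl⟩
  · subst h4
    rw [if_pos (by omega)] at ha hb
    subst ha hb
    refine Or.inl ⟨1 + z, 1 + z', by omega, by omega, by omega, by omega, ?_⟩
    simp [whiteTile]
    omega
  · rw [if_pos (by omega)] at hb
    subst hb
    refine Or.inr (Or.inl ⟨1 - y, 1 - a, z, by omega, by omega, by split_ifs at ha <;> omega,
      by split_ifs at ha <;> omega, by omega, by omega, ?_⟩)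
    simp [horTile]
    split_ifs at ha <;> omega
  · subst h4
    rw [if_pos (by omega)] at ha
    subst ha
    refine Or.inr (Or.inr (Or.inl ⟨1 - y', 1 - b, z', by omega, by omega,
      by split_ifs at hb <;> omega, by split_ifs at hb <;> omega, by omega, by omega, ?_⟩))
    simp [horTile, hatT]
    split_ifs at hb <;> omega
  · refine Or.inr (Or.inr (Or.inr ⟨1 - a, 1 - y', 1 - b, 1 - y, ?_⟩))
    simp only [junctionTile, WangTile.mk.injEq, Prod.mk.injEq]
    split_ifs at ha hb <;> omega

theorem exists_desub {n : ℤ} (hn : 1 ≤ n) {x : ℤ × ℤ → WangTile Lbl}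
    (hx : ValidConfig (Tmet n) x) : ∃ y c r, Desub n x y c r := by
  have hx' := hx.mono (Tmet_subset_Text n)
  have g := grid_of_valid hx'
  obtain ⟨c, hc⟩ := exists_gaps g.col (g.exists_col hn)
  obtain ⟨r, hr⟩ := exists_gaps g.row (g.swap.exists_col hn)
  have hcm : ∀ k, c (k + 1) = c k + (c (k + 1) - c k) := fun k => by ring
  have hrm : ∀ k, r (k + 1) = r k + (r (k + 1) - r k) := fun k => by ring
  choose t ht using fun k l => g.exists_step hn (hc k).2.1 (hr l)
  choose t' ht' using fun k l => g.swap.exists_step hn (hr l).2.1 (hc k)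
  set w : ℤ → ℤ := fun k => c (k + 1) - c k with hw
  set h : ℤ → ℤ := fun l => r (l + 1) - r l with hh
  let y : ℤ × ℤ → WangTile Lbl := fun m =>
    ⟨(n + 1 - h m.2, n + 2 - h m.2 - (x (c (m.1 + 1), r m.2)).left.2.1,
        n + 1 - h m.2 + t (m.1 + 1) m.2),
      (n + 1 - w m.1, n + 2 - w m.1 - (x (c m.1, r (m.2 + 1))).bottom.2.1,
        n + 1 - w m.1 + t' m.1 (m.2 + 1)),
      (n + 1 - h m.2, n + 2 - h m.2 - (x (c m.1, r m.2)).left.2.1, n + 1 - h m.2 + t m.1 m.2),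
      (n + 1 - w m.1, n + 2 - w m.1 - (x (c m.1, r m.2)).bottom.2.1,
        n + 1 - w m.1 + t' m.1 m.2)⟩
  refine ⟨y, c, r, hx, ?_, ?_, ?_, ?_, ?_⟩
  · refine valid_Tmet_of_Text hn ⟨?_, fun _ => rfl, fun _ => rfl⟩
    rintro ⟨k, l⟩
    have e1 := g.block hn (hc k) (hr l) (ht k l) (by rw [← hcm]; exact ht (k + 1) l)
    have e2 := g.swap.block hn (hr l) (hc k) (ht' k l) (by rw [← hrm]; exact ht' k (l + 1))
    rw [← hcm, ← hrm] at e1 e2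
    exact mem_Text_of_block (g.swap.b2_mem _ _) (g.b2_mem _ _) e1.1 e2.1
      ⟨(ht k l).1, (ht k l).2.1⟩ ⟨(ht' k l).1, (ht' k l).2.1⟩ e2.2.1 e1.2.1 e1.2.2.1 e2.2.2.1
      e1.2.2.2 e2.2.2.2
  · intro k l
    simp only [y, w]; ring
  · intro k l
    simp only [y, h]; ring
  · intro k l j h0 h1
    have h2 := (ht k l).2.2 j h0 (by omega)
    have f1 := left_fst hx' (c k) (r l + j)
    dsimp only at h2
    rw [show r l + 1 + j = r l + j + 1 by ring] at h2
    by_cases hj : j = 0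
    · subst hj
      have h3 := g.junc _ _ (hc k).2.1 (hr l).2.1
      have h4 := (hr l).2.1
      simp only [letter, if_true, y]
      rw [add_zero] at *
      ext
      · exact f1.trans h4
      · simp; ring
      · simp; split_ifs <;> omega
    · have h4 := (hr l).2.2.2 j (by omega) (by omega)
      have h3 := g.ver _ _ (hc k).2.1 h4
      simp only [letter, if_neg hj, y]
      ext
      · exact f1.trans h4
      · simp; omega
      · simp; split_ifs <;> omega
  · intro k l j h0 h1
    have h2 := (ht' k l).2.2 j h0 (by omega)
    have f1 := bottom_fst hx' (c k + j) (r l)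
    dsimp only at h2
    rw [show c k + 1 + j = c k + j + 1 by ring] at h2
    by_cases hj : j = 0
    · subst hj
      have h3 := g.junc _ _ (hc k).2.1 (hr l).2.1
      have h4 := (hc k).2.1
      simp only [letter, if_true, y]
      rw [add_zero] at *
      ext
      · exact f1.trans h4
      · simp; ring
      · simp; split_ifs <;> omega
    · have h4 := (hc k).2.2.2 j (by omega) (by omega)
      have h3 := g.hor _ _ h4 (hr l).2.1
      simp only [letter, if_neg hj, y]
      ext
      · exact f1.trans h4
      · simp; omega
      · simp; split_ifs <;> omega

/-- The transposed configuration. -/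
def tr (x : ℤ × ℤ → WangTile Lbl) : ℤ × ℤ → WangTile Lbl := fun m => hatT (x (m.2, m.1))

theorem ValidConfig.tr {n : ℤ} {x : ℤ × ℤ → WangTile Lbl} (hx : ValidConfig (Tmet n) x) :
    ValidConfig (Tmet n) (tr x) :=
  ⟨fun _ => hatT_mem_Tmet (hx.1 _), fun m => hx.2.2 (m.2, m.1), fun m => hx.2.1 (m.2, m.1)⟩

theorem hatT_injective {C : Type*} {s t : WangTile C} (h : hatT s = hatT t) : s = t :=
  congrArg hatT h

theorem Tmet_fst {n : ℤ} {t : WangTile Lbl} (h : t ∈ Tmet n) :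
    (t.left.1 = 0 ∨ t.left.1 = 1) ∧ (t.bottom.1 = 0 ∨ t.bottom.1 = 1) := by
  rw [mem_Tmet_iff] at h
  obtain ⟨i, j, h0, h1, h2, h3, rfl⟩ | ⟨y, e, i, h0, h1, h2, h3, h4, h5, rfl⟩ |
      ⟨y, e, i, h0, h1, h2, h3, h4, h5, rfl⟩ | ⟨k, l, r, s, h0, h1, h2, h3, h4, h5, h6, h7, rfl⟩ := h <;>
  simp [whiteTile, horTile, hatT, junctionTile]

/-- Junction tiles with the same bottom label have the same right label. -/
theorem junction_right_eq {n : ℤ} {s t : WangTile Lbl} (hs : s ∈ Tmet n) (ht : t ∈ Tmet n)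
    (h0 : s.left.1 = 0) (h1 : s.bottom.1 = 0) (h2 : t.left.1 = 0) (h : s.bottom = t.bottom) :
    s.right = t.right := by
  rw [mem_Tmet_iff] at hs ht
  obtain ⟨i, j, -, -, -, -, rfl⟩ | ⟨y, e, i, -, -, -, -, -, -, rfl⟩ |
      ⟨y, e, i, -, -, -, -, -, -, rfl⟩ | ⟨k, l, r, s, -, -, -, -, -, -, -, -, rfl⟩ := hs
  · simp [whiteTile] at h0
  · simp [horTile] at h1
  · simp [horTile, hatT] at h0
  obtain ⟨i, j, -, -, -, -, rfl⟩ | ⟨y, e, i, -, -, -, -, -, -, rfl⟩ |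
      ⟨y, e, i, -, -, -, -, -, -, rfl⟩ | ⟨k', l', r', s', -, -, -, -, -, -, -, -, rfl⟩ := ht
  · simp [whiteTile] at h2
  · simp [horTile, junctionTile] at h
  · simp [horTile, hatT] at h2
  simp [junctionTile] at h ⊢
  omega

namespace Desub

variable {n : ℤ} {x y x' y' : ℤ × ℤ → WangTile Lbl} {c r c' r' : ℤ → ℤ}

theorem swap (D : Desub n x y c r) : Desub n (tr x) (tr y) r c where
  valid := D.valid.tr
  valid' := D.valid'.tr
  col k l := D.row l k
  row k l := D.col l k
  left k l := D.bottom l k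
  bottom k l := D.left l k

theorem col_lt (hn : 1 ≤ n) (D : Desub n x y c r) (k : ℤ) : c k < c (k + 1) := by
  have := D.col k 0
  have := (Tmet_fst (D.valid'.1 (k, 0))).2
  omega

theorem row_lt (hn : 1 ≤ n) (D : Desub n x y c r) (l : ℤ) : r l < r (l + 1) := D.swap.col_lt hn l

theorem corner_left (hn : 1 ≤ n) (D : Desub n x y c r) (k l : ℤ) :
    (x (c k, r l)).left = letter n (y (k, l)).left 0 := by
  simpa using D.left k l 0 le_rfl (by have := D.row_lt hn l; omega)

theorem corner_bottom (hn : 1 ≤ n) (D : Desub n x y c r) (k l : ℤ) :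
    (x (c k, r l)).bottom = letter n (y (k, l)).bottom 0 := D.swap.corner_left hn l k

theorem width_eq (D : Desub n x y c r) (D' : Desub n x' y' c' r') {k l k' l' : ℤ}
    (h : y (k, l) = y' (k', l')) : c (k + 1) - c k = c' (k' + 1) - c' k' := by
  rw [D.col k l, D'.col k' l', h]; ring

theorem height_eq (D : Desub n x y c r) (D' : Desub n x' y' c' r') {k l k' l' : ℤ}
    (h : y (k, l) = y' (k', l')) : r (l + 1) - r l = r' (l' + 1) - r' l' := by
  rw [D.row k l, D'.row k' l', h]; ring

/-- The block of a tile depends only on the tile. -/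
theorem block_eq (D : Desub n x y c r) (D' : Desub n x' y' c' r') {k l k' l' : ℤ}
    (h : y (k, l) = y' (k', l')) {i j : ℤ} (hi : 0 ≤ i) (hi' : c k + i < c (k + 1)) (hj : 0 ≤ j)
    (hj' : r l + j < r (l + 1)) : x (c k + i, r l + j) = x' (c' k' + i, r' l' + j) := by
  have hw := D.width_eq D' h
  have hh := D.height_eq D' h
  have key : ∀ p : ℕ, ∀ i j : ℤ, i + j = p → 0 ≤ i → c k + i < c (k + 1) → 0 ≤ j →
      r l + j < r (l + 1) → x (c k + i, r l + j) = x' (c' k' + i, r' l' + j) := by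
    intro p
    induction p with
    | zero =>
      intro i j hp hi hi' hj hj'
      obtain rfl : i = 0 := by push_cast at hp; omega
      obtain rfl : j = 0 := by push_cast at hp; omega
      refine Tmet_det (D.valid.1 _) (D'.valid.1 _) ?_ ?_
      · rw [add_zero, D.left _ _ _ le_rfl hj', add_zero, D'.left _ _ _ le_rfl (by omega), h]
      · rw [add_zero (r l), D.bottom _ _ _ le_rfl hi', add_zero (r' l'),
          D'.bottom _ _ _ le_rfl (by omega), h]
    | succ p ih =>
      intro i j hp hi hi' hj hj'
      push_cast at hp
      refine Tmet_det (D.valid.1 _) (D'.valid.1 _) ?_ ?_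
      · by_cases h0 : i = 0
        · subst h0
          rw [add_zero, D.left _ _ _ hj hj', add_zero, D'.left _ _ _ hj (by omega), h]
        · have h1 := D.valid.2.1 (c k + (i - 1), r l + j)
          have h2 := D'.valid.2.1 (c' k' + (i - 1), r' l' + j)
          rw [ih (i - 1) j (by omega) (by omega) (by omega) hj hj', h2] at h1
          simpa [add_assoc] using h1.symm
      · by_cases h0 : j = 0
        · subst h0
          rw [add_zero (r l), D.bottom _ _ _ hi hi', add_zero (r' l'),
            D'.bottom _ _ _ hi (by omega), h]
        · have h1 := D.valid.2.2 (c k + i, r l + (j - 1))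
          have h2 := D'.valid.2.2 (c' k' + i, r' l' + (j - 1))
          rw [ih i (j - 1) (by omega) hi hi' (by omega) (by omega), h2] at h1
          simpa [add_assoc] using h1.symm
  exact key (i + j).toNat i j (by omega) hi hi' hj hj'

theorem above_right_eq (hn : 1 ≤ n) (D : Desub n x y c r) (D' : Desub n x' y' c' r')
    {k l k' l' : ℤ} (h : y (k, l) = y' (k', l')) (i : ℕ) (hi : c k + i < c (k + 1)) :
    (x (c k + i, r (l + 1))).right = (x' (c' k' + i, r' (l' + 1))).right ∧
    (1 ≤ i → x (c k + i, r (l + 1)) = x' (c' k' + i, r' (l' + 1))) := by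
  have hw := D.width_eq D' h
  have hh := D.height_eq D' h
  have hb : ∀ i : ℤ, 0 ≤ i → c k + i < c (k + 1) →
      (x (c k + i, r (l + 1))).bottom = (x' (c' k' + i, r' (l' + 1))).bottom := by
    intro i h0 h1
    have := D.row_lt hn l
    have h2 := D.block_eq D' h h0 h1 (j := r (l + 1) - r l - 1) (by omega) (by omega)
    have h3 := D.valid.2.2 (c k + i, r l + (r (l + 1) - r l - 1))
    have h4 := D'.valid.2.2 (c' k' + i, r' l' + (r (l + 1) - r l - 1))
    rw [h2, h4] at h3
    dsimp only at h3
    rw [show r' l' + (r (l + 1) - r l - 1) + 1 = r' (l' + 1) by omega,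
      show r l + (r (l + 1) - r l - 1) + 1 = r (l + 1) by omega] at h3
    exact h3.symm
  induction i with
  | zero =>
    refine ⟨?_, by simp⟩
    have h0 := hb 0 le_rfl (by simpa using hi)
    push_cast
    rw [add_zero, add_zero] at h0 ⊢
    refine junction_right_eq (D.valid.1 _) (D'.valid.1 _) ?_ ?_ ?_ h0
    · rw [D.corner_left hn]; simp [letter]
    · rw [D.corner_bottom hn]; simp [letter]
    · rw [D'.corner_left hn]; simp [letter]
  | succ i ih =>
    push_cast at hi ⊢
    have h1 := (ih (by omega)).1
    have h2 := hb (i + 1) (by omega) (by omega)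
    have h3 := D.valid.2.1 (c k + i, r (l + 1))
    have h4 := D'.valid.2.1 (c' k' + i, r' (l' + 1))
    rw [h1, h4] at h3
    dsimp only at h3
    rw [add_assoc, add_assoc] at h3
    have := Tmet_det (D.valid.1 _) (D'.valid.1 _) h3.symm h2
    exact ⟨by rw [this], fun _ => this⟩

/-- A tile determines its block and the adjacent cells above and on the right of it, except two
corners. -/
theorem ext_eq (hn : 1 ≤ n) (D : Desub n x y c r) (D' : Desub n x' y' c' r')
    {k l k' l' : ℤ} (h : y (k, l) = y' (k', l')) {i j : ℤ} (hi : 0 ≤ i) (hi' : c k + i ≤ c (k + 1))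
    (hj : 0 ≤ j) (hj' : r l + j ≤ r (l + 1)) (h1 : i = 0 → r l + j < r (l + 1))
    (h2 : j = 0 → c k + i < c (k + 1)) :
    x (c k + i, r l + j) = x' (c' k' + i, r' l' + j) := by
  have hw := D.width_eq D' h
  have hh := D.height_eq D' h
  have ht : tr y (l, k) = tr y' (l', k') := congrArg hatT h
  rcases eq_or_lt_of_le hi' with e1 | e1 <;> rcases eq_or_lt_of_le hj' with e2 | e2
  · have a1 := (D.above_right_eq hn D' h (i - 1).toNat (by
      have := D.col_lt hn k; omega)).1
    have a2 := (D.swap.above_right_eq hn D'.swap ht (j - 1).toNat (by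
      have := D.row_lt hn l; omega)).1
    rw [Int.toNat_of_nonneg (by have := D.col_lt hn k; omega)] at a1
    rw [Int.toNat_of_nonneg (by have := D.row_lt hn l; omega)] at a2
    have b1 := D.valid.2.1 (c k + (i - 1), r (l + 1))
    have b2 := D'.valid.2.1 (c' k' + (i - 1), r' (l' + 1))
    have b3 := D.valid.2.2 (c (k + 1), r l + (j - 1))
    have b4 := D'.valid.2.2 (c' (k' + 1), r' l' + (j - 1))
    rw [a1, b2] at b1
    simp only [tr, hatT] at a2
    rw [a2, b4] at b3
    rw [e1, e2, show c' k' + i = c' (k' + 1) by omega, show r' l' + j = r' (l' + 1) by omega]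
    dsimp only at b1 b3
    rw [show c' k' + (i - 1) + 1 = c' (k' + 1) by omega,
      show c k + (i - 1) + 1 = c (k + 1) by omega] at b1
    rw [show r' l' + (j - 1) + 1 = r' (l' + 1) by omega,
      show r l + (j - 1) + 1 = r (l + 1) by omega] at b3
    exact Tmet_det (D.valid.1 _) (D'.valid.1 _) b1.symm b3.symm
  · have a2 := (D.swap.above_right_eq hn D'.swap ht j.toNat (by omega)).2 (by omega)
    rw [Int.toNat_of_nonneg hj] at a2
    rw [e1, show c' k' + i = c' (k' + 1) by omega]
    exact hatT_injective a2
  · have a2 := (D.above_right_eq hn D' h i.toNat (by omega)).2 (by omega)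
    rw [Int.toNat_of_nonneg hi] at a2
    rw [e2, show r' l' + j = r' (l' + 1) by omega]
    exact a2
  · exact D.block_eq D' h hi e1 hj e2

end Desub

/-- `Chain n m x y c r`: `x` is the image of `y` under the `m`-th power of the substitution. -/
def Chain (n : ℤ) : ℕ → (ℤ × ℤ → WangTile Lbl) → (ℤ × ℤ → WangTile Lbl) →
    (ℤ → ℤ) → (ℤ → ℤ) → Prop
  | 0, x, y, c, r => ValidConfig (Tmet n) x ∧ x = y ∧ c = id ∧ r = id
  | m + 1, x, y, c, r => ∃ x1 c1 r1 c2 r2, Desub n x x1 c1 r1 ∧ Chain n m x1 y c2 r2 ∧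
      c = c1 ∘ c2 ∧ r = r1 ∘ r2

theorem exists_block {c : ℤ → ℤ} (h : StrictMono c) (I : ℤ) :
    ∃ k, c k ≤ I ∧ I < c (k + 1) := by
  have h1 : ∀ m : ℕ, c 0 + m ≤ c m ∧ c (-m) ≤ c 0 - m := by
    intro m
    induction m with
    | zero => simp
    | succ m ih =>
      have h2 := h (show (m : ℤ) < m + 1 by omega)
      have h3 := h (show -((m : ℤ) + 1) < -m by omega)
      push_cast
      omega
  obtain ⟨k, hk, hk'⟩ := Int.exists_greatest_of_bdd (P := fun k => c k ≤ I)
    ⟨(I - c 0).toNat, fun z hz => by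
      by_contra hc
      have h2 := (h1 z.toNat).1
      rw [Int.toNat_of_nonneg (by omega)] at h2
      omega⟩
    ⟨-(c 0 - I).toNat, by have := (h1 (c 0 - I).toNat).2; omega⟩
  exact ⟨k, hk, by by_contra hc; have := hk' (k + 1) (by omega); omega⟩

theorem Desub.chain {n : ℤ} {x y : ℤ × ℤ → WangTile Lbl} {c r : ℤ → ℤ} (D : Desub n x y c r) :
    Chain n 1 x y c r := ⟨y, c, r, id, id, D, ⟨D.valid', rfl, rfl, rfl⟩, rfl, rfl⟩

namespace Chain

variable {n : ℤ} {x y z x' y' : ℤ × ℤ → WangTile Lbl} {c r c' r' : ℤ → ℤ}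

theorem desub (h : Chain n 1 x y c r) : Desub n x y c r := by
  obtain ⟨x1, c1, r1, c2, r2, D, ⟨-, rfl, rfl, rfl⟩, rfl, rfl⟩ := h
  exact D

theorem valid {m : ℕ} (h : Chain n m x y c r) : ValidConfig (Tmet n) x := by
  cases m with
  | zero => exact h.1
  | succ m =>
    obtain ⟨x1, c1, r1, c2, r2, D, -⟩ := h
    exact D.valid

theorem valid' {m : ℕ} (h : Chain n m x y c r) : ValidConfig (Tmet n) y := by
  induction m generalizing x c r with
  | zero => exact h.2.1 ▸ h.1
  | succ m ih =>
    obtain ⟨x1, c1, r1, c2, r2, -, h, -⟩ := h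
    exact ih h

theorem swap {m : ℕ} (h : Chain n m x y c r) : Chain n m (tr x) (tr y) r c := by
  induction m generalizing x c r with
  | zero => exact ⟨h.1.tr, by rw [h.2.1], h.2.2.2, h.2.2.1⟩
  | succ m ih =>
    obtain ⟨x1, c1, r1, c2, r2, D, h, rfl, rfl⟩ := h
    exact ⟨_, _, _, _, _, D.swap, ih h, rfl, rfl⟩

theorem col_mono (hn : 1 ≤ n) {m : ℕ} (h : Chain n m x y c r) : StrictMono c := by
  induction m generalizing x c r with
  | zero => rw [h.2.2.1]; exact strictMono_id
  | succ m ih =>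
    obtain ⟨x1, c1, r1, c2, r2, D, h, rfl, rfl⟩ := h
    exact (strictMono_int_of_lt_succ (D.col_lt hn)).comp (ih h)

theorem row_mono (hn : 1 ≤ n) {m : ℕ} (h : Chain n m x y c r) : StrictMono r :=
  h.swap.col_mono hn

theorem split {a b : ℕ} (h : Chain n (a + b) x z c r) :
    ∃ y c1 r1 c2 r2, Chain n a x y c1 r1 ∧ Chain n b y z c2 r2 ∧ c = c1 ∘ c2 ∧ r = r1 ∘ r2 := by
  induction a generalizing x c r with
  | zero =>
    rw [Nat.zero_add] at h
    exact ⟨x, id, id, c, r, ⟨h.valid, rfl, rfl, rfl⟩, h, rfl, rfl⟩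
  | succ a ih =>
    rw [Nat.succ_add] at h
    obtain ⟨x1, c1, r1, c2, r2, D, h, rfl, rfl⟩ := h
    obtain ⟨y, c3, r3, c4, r4, h1, h2, rfl, rfl⟩ := ih h
    exact ⟨y, _, _, c4, r4, ⟨_, _, _, _, _, D, h1, rfl, rfl⟩, h2, rfl, rfl⟩

theorem block_eq (hn : 1 ≤ n) {m : ℕ} (h : Chain n m x y c r) (h' : Chain n m x' y' c' r')
    {k l k' l' : ℤ} (e : y (k, l) = y' (k', l')) :
    c (k + 1) - c k = c' (k' + 1) - c' k' ∧ r (l + 1) - r l = r' (l' + 1) - r' l' ∧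
    ∀ i j, 0 ≤ i → c k + i < c (k + 1) → 0 ≤ j → r l + j < r (l + 1) →
      x (c k + i, r l + j) = x' (c' k' + i, r' l' + j) := by
  induction m generalizing x c r x' c' r' with
  | zero =>
    obtain ⟨-, rfl, rfl, rfl⟩ := h
    obtain ⟨-, rfl, rfl, rfl⟩ := h'
    simp only [id]
    refine ⟨by ring, by ring, fun i j h0 h1 h2 h3 => ?_⟩
    obtain rfl : i = 0 := by omega
    obtain rfl : j = 0 := by omega
    simpa using e
  | succ m ih =>
    obtain ⟨x1, c1, r1, c2, r2, D, h, rfl, rfl⟩ := h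
    obtain ⟨x1', c1', r1', c2', r2', D', h', rfl, rfl⟩ := h'
    obtain ⟨e1, e2, e3⟩ := ih h h'
    have hc := h.col_mono hn (show k < k + 1 by omega)
    have hr := h.row_mono hn (show l < l + 1 by omega)
    have f1 : ∀ i : ℕ, c2 k + i ≤ c2 (k + 1) →
        c1 (c2 k + i) - c1 (c2 k) = c1' (c2' k' + i) - c1' (c2' k') := by
      intro i
      induction i with
      | zero => simp
      | succ i ih =>
        intro hi
        push_cast at hi ⊢
        have h1 := e3 i 0 (by omega) (by omega) le_rfl (by omega)
        have h2 := D.width_eq D' h1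
        have h3 := ih (by omega)
        rw [← add_assoc, ← add_assoc]
        omega
    have f2 : ∀ i : ℕ, r2 l + i ≤ r2 (l + 1) →
        r1 (r2 l + i) - r1 (r2 l) = r1' (r2' l' + i) - r1' (r2' l') := by
      intro i
      induction i with
      | zero => simp
      | succ i ih =>
        intro hi
        push_cast at hi ⊢
        have h1 := e3 0 i le_rfl (by omega) (by omega) (by omega)
        have h2 := D.height_eq D' h1
        have h3 := ih (by omega)
        rw [← add_assoc, ← add_assoc]
        omega
    simp only [Function.comp_apply]
    have M1 := strictMono_int_of_lt_succ (D.col_lt hn)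
    have M2 := strictMono_int_of_lt_succ (D.row_lt hn)
    refine ⟨?_, ?_, fun i j hi hi' hj hj' => ?_⟩
    · have := f1 (c2 (k + 1) - c2 k).toNat (by omega)
      rw [Int.toNat_of_nonneg (by omega)] at this
      rw [show c2 k + (c2 (k + 1) - c2 k) = c2 (k + 1) by ring, e1,
        show c2' k' + (c2' (k' + 1) - c2' k') = c2' (k' + 1) by ring] at this
      exact this
    · have := f2 (r2 (l + 1) - r2 l).toNat (by omega)
      rw [Int.toNat_of_nonneg (by omega)] at this
      rw [show r2 l + (r2 (l + 1) - r2 l) = r2 (l + 1) by ring, e2,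
        show r2' l' + (r2' (l' + 1) - r2' l') = r2' (l' + 1) by ring] at this
      exact this
    · obtain ⟨p, hp, hp'⟩ := exists_block M1 (c1 (c2 k) + i)
      obtain ⟨q, hq, hq'⟩ := exists_block M2 (r1 (r2 l) + j)
      have a1 : c2 k < p + 1 := M1.lt_iff_lt.1 (by omega)
      have a2 : p < c2 (k + 1) := M1.lt_iff_lt.1 (by omega)
      have a3 : r2 l < q + 1 := M2.lt_iff_lt.1 (by omega)
      have a4 : q < r2 (l + 1) := M2.lt_iff_lt.1 (by omega)
      have b1 := f1 (p - c2 k).toNat (by omega)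
      have b2 := f2 (q - r2 l).toNat (by omega)
      rw [Int.toNat_of_nonneg (by omega), add_sub_cancel] at b1 b2
      have b3 := e3 (p - c2 k) (q - r2 l) (by omega) (by omega) (by omega) (by omega)
      rw [add_sub_cancel, add_sub_cancel] at b3
      have := D.block_eq D' b3 (i := c1 (c2 k) + i - c1 p) (j := r1 (r2 l) + j - r1 q)
        (by omega) (by omega) (by omega) (by omega)
      rw [add_sub_cancel, add_sub_cancel] at this
      rw [this]
      congr 1
      ext <;> simp <;> omega

theorem two_width (hn : 1 ≤ n) (h : Chain n 2 x y c r) (k : ℤ) : c k + 2 ≤ c (k + 1) := by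
  obtain ⟨x1, c1, r1, c2, r2, D, h, rfl, rfl⟩ := h
  have D2 := h.desub
  have h1 := D2.corner_bottom hn k 0
  have h2 := D.col (c2 k) (r2 0)
  rw [h1] at h2
  have h3 := (strictMono_int_of_lt_succ (D.col_lt hn)).monotone
    (show c2 k + 1 ≤ c2 (k + 1) from D2.col_lt hn k)
  simp [letter] at h2 ⊢
  omega

end Chain

theorem exists_chain {n : ℤ} (hn : 1 ≤ n) (m : ℕ) {x : ℤ × ℤ → WangTile Lbl}
    (hx : ValidConfig (Tmet n) x) : ∃ y c r, Chain n m x y c r := by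
  induction m generalizing x with
  | zero => exact ⟨x, id, id, hx, rfl, rfl, rfl⟩
  | succ m ih =>
    obtain ⟨x1, c1, r1, D⟩ := exists_desub hn hx
    obtain ⟨y, c2, r2, h⟩ := ih D.valid'
    exact ⟨y, _, _, _, _, _, _, _, D, h, rfl, rfl⟩

/-- Blocks of a high enough level are large. -/
theorem exists_wide {n : ℤ} (hn : 1 ≤ n) (N : ℕ) : ∃ m, ∀ x y c r, Chain n m x y c r →
    ∀ k, c k + N ≤ c (k + 1) := by
  suffices h : ∃ m, ∀ x y c r, Chain n m x y c r → ∀ k, c k + N + 1 ≤ c (k + 1) by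
    obtain ⟨m, hm⟩ := h
    exact ⟨m, fun x y c r h k => by have := hm x y c r h k; omega⟩
  induction N with
  | zero =>
    refine ⟨0, fun x y c r h k => ?_⟩
    rw [h.2.2.1]; simp
  | succ N ih =>
    obtain ⟨m, hm⟩ := ih
    refine ⟨m + 2, fun x y c r h k => ?_⟩
    obtain ⟨y1, c1, r1, c2, r2, h1, h2, rfl, rfl⟩ := h.split
    have a1 := h2.two_width hn k
    have a2 := hm _ _ _ _ h1 (c2 k)
    have a3 := hm _ _ _ _ h1 (c2 k + 1)
    have a4 := (h1.col_mono hn).monotone a1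
    rw [show c2 k + 1 + 1 = c2 k + 2 by ring] at a3
    simp only [Function.comp_apply]
    push_cast
    omega

theorem exists_eq_whiteTile {n : ℤ} {t : WangTile Lbl} (h : t ∈ Tmet n) (h0 : t.left.1 = 1)
    (h1 : t.bottom.1 = 1) : ∃ i j, t = whiteTile i j := by
  rw [mem_Tmet_iff] at h
  obtain ⟨i, j, -, -, -, -, rfl⟩ | ⟨y, e, i, -, -, -, -, -, -, rfl⟩ |
      ⟨y, e, i, -, -, -, -, -, -, rfl⟩ | ⟨k, l, r, s, -, -, -, -, -, -, -, -, rfl⟩ := h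
  · exact ⟨i, j, rfl⟩
  · simp [horTile] at h0
  · simp [horTile, hatT] at h1
  · simp [junctionTile] at h1

theorem exists_eq_hatT_horTile {n : ℤ} {t : WangTile Lbl} (h : t ∈ Tmet n) (h0 : t.left.1 = 1)
    (h1 : t.bottom.1 = 0) : ∃ y e i, t = hatT (horTile n y e i) := by
  rw [mem_Tmet_iff] at h
  obtain ⟨i, j, -, -, -, -, rfl⟩ | ⟨y, e, i, -, -, -, -, -, -, rfl⟩ |
      ⟨y, e, i, -, -, -, -, -, -, rfl⟩ | ⟨k, l, r, s, -, -, -, -, -, -, -, -, rfl⟩ := h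
  · simp [whiteTile] at h1
  · simp [horTile] at h0
  · exact ⟨y, e, i, rfl⟩
  · simp [junctionTile] at h0

theorem exists_eq_junctionTile {n : ℤ} {t : WangTile Lbl} (h : t ∈ Tmet n) (h0 : t.left.1 = 0)
    (h1 : t.bottom.1 = 0) : ∃ k l r s, t = junctionTile n k l r s := by
  rw [mem_Tmet_iff] at h
  obtain ⟨i, j, -, -, -, -, rfl⟩ | ⟨y, e, i, -, -, -, -, -, -, rfl⟩ |
      ⟨y, e, i, -, -, -, -, -, -, rfl⟩ | ⟨k, l, r, s, -, -, -, -, -, -, -, -, rfl⟩ := h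
  · simp [whiteTile] at h1
  · simp [horTile] at h1
  · simp [horTile, hatT] at h0
  · exact ⟨k, l, r, s, rfl⟩

namespace Desub

variable {n : ℤ} {x y : ℤ × ℤ → WangTile Lbl} {c r : ℤ → ℤ}

theorem bottom_fst_eq (D : Desub n x y c r) {k i : ℤ} (hi : 0 ≤ i) (hi' : c k + i < c (k + 1))
    (j : ℤ) : (x (c k + i, j)).bottom.1 = if i = 0 then 0 else 1 := by
  have h1 := bottom_fst (D.valid.mono (Tmet_subset_Text n)) (c k + i) j
  have h2 := bottom_fst (D.valid.mono (Tmet_subset_Text n)) (c k + i) (r 0)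
  rw [h1, ← h2, D.bottom k 0 i hi hi', letter]
  split_ifs <;> rfl

theorem left_fst_eq (D : Desub n x y c r) {l j : ℤ} (hj : 0 ≤ j) (hj' : r l + j < r (l + 1))
    (i : ℤ) : (x (i, r l + j)).left.1 = if j = 0 then 0 else 1 :=
  D.swap.bottom_fst_eq hj hj' i

theorem corner_eq (hn : 1 ≤ n) (D : Desub n x y c r) (k l : ℤ) :
    x (c k, r l) = junctionTile n
      (if (y (k, l)).bottom.2.2 - (y (k, l)).bottom.1 ≤ 0 then 1 else 0)
      ((y (k, l)).bottom.1 - (y (k, l)).bottom.2.1 + 1)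
      (if (y (k, l)).left.2.2 - (y (k, l)).left.1 ≤ 0 then 1 else 0)
      ((y (k, l)).left.1 - (y (k, l)).left.2.1 + 1) := by
  have h1 := D.corner_left hn k l
  have h2 := D.corner_bottom hn k l
  obtain ⟨k', l', r', s', h⟩ := exists_eq_junctionTile (D.valid.1 (c k, r l))
    (by rw [h1]; simp [letter]) (by rw [h2]; simp [letter])
  rw [h] at h1 h2 ⊢
  simp only [junctionTile, letter, if_true, Prod.mk.injEq, true_and] at h1 h2
  obtain ⟨rfl, h1⟩ := h1
  obtain ⟨rfl, h2⟩ := h2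
  congr 1 <;> split_ifs at h1 h2 ⊢ <;> omega

theorem left_col_eq (hn : 1 ≤ n) (D : Desub n x y c r) (k l : ℤ) (j : ℕ)
    (hj : r l + (j + 1) < r (l + 1)) :
    x (c k, r l + (j + 1)) = hatT (horTile n
      (if (y (k, l)).left.2.2 - (y (k, l)).left.1 ≤ j then 1 else 0)
      (if (y (k, l)).left.2.2 - (y (k, l)).left.1 ≤ j + 1 then 1 else 0)
      ((y (k, l)).left.1 - (y (k, l)).left.2.1 + (j + 1))) := by
  have h1 := D.left k l (j + 1) (by omega) hj
  have hb := D.bottom_fst_eq (k := k) le_rfl (by simpa using D.col_lt hn k) (r l + (j + 1))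
  rw [add_zero, if_pos rfl] at hb
  obtain ⟨y', e', i', h⟩ := exists_eq_hatT_horTile (D.valid.1 (c k, r l + (j + 1)))
    (by rw [h1, letter, if_neg (by omega)]) hb
  have hbot : (x (c k, r l + (j + 1))).bottom =
      (0, (if (y (k, l)).left.2.2 - (y (k, l)).left.1 ≤ j then 1 else 0),
        ((y (k, l)).left.1 - (y (k, l)).left.2.1 + (j + 1))) := by
    rw [← add_assoc, ← D.valid.2.2 (c k, r l + j)]
    cases j with
    | zero => simp [D.corner_eq hn, junctionTile]
    | succ j =>
      push_cast at hj ⊢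
      rw [left_col_eq hn D k l j (by omega)]
      simp [hatT, horTile]; ring
  rw [h] at h1 hbot ⊢
  simp only [hatT, horTile, letter, Prod.mk.injEq, true_and] at hbot h1 ⊢
  rw [if_neg (by omega)] at h1
  obtain ⟨rfl, rfl⟩ := hbot
  simp only [Prod.mk.injEq, true_and] at h1
  have : e' = if (y (k, l)).left.2.2 - (y (k, l)).left.1 ≤ j + 1 then 1 else 0 := by
    split_ifs at h1 ⊢ <;> omega
  rw [← this]

end Desub

/-- The tile `t` occurs in all blocks of some fixed level. -/
def Prim (n : ℤ) (t : WangTile Lbl) : Prop :=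
  ∃ m, ∀ x y c r, Chain n m x y c r → ∀ k l, ∃ i j, c k ≤ i ∧ i < c (k + 1) ∧
    r l ≤ j ∧ j < r (l + 1) ∧ x (i, j) = t

namespace Prim

variable {n : ℤ} {s t : WangTile Lbl}

theorem hat (h : Prim n t) : Prim n (hatT t) := by
  obtain ⟨m, hm⟩ := h
  refine ⟨m, fun x y c r h k l => ?_⟩
  obtain ⟨i, j, h0, h1, h2, h3, h4⟩ := hm _ _ _ _ h.swap l k
  exact ⟨j, i, h2, h3, h0, h1, hatT_eq_iff.1 h4⟩

theorem of_mem (hn : 1 ≤ n) (hs : Prim n s) (h : ∀ x y c r, Desub n x y c r → ∀ k l,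
    y (k, l) = s → ∃ i j, c k ≤ i ∧ i < c (k + 1) ∧ r l ≤ j ∧ j < r (l + 1) ∧ x (i, j) = t) :
    Prim n t := by
  obtain ⟨m, hm⟩ := hs
  refine ⟨m + 1, fun x y c r hc k l => ?_⟩
  obtain ⟨x1, c1, r1, c2, r2, D, hc, rfl, rfl⟩ := hc
  obtain ⟨i, j, h0, h1, h2, h3, h4⟩ := hm _ _ _ _ hc k l
  obtain ⟨i', j', h0', h1', h2', h3', h5⟩ := h _ _ _ _ D i j h4
  have M1 := (strictMono_int_of_lt_succ (D.col_lt hn)).monotone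
  have M2 := (strictMono_int_of_lt_succ (D.row_lt hn)).monotone
  exact ⟨i', j', (M1 h0).trans h0', h1'.trans_le (M1 h1), (M2 h2).trans h2',
    h3'.trans_le (M2 h3), h5⟩

theorem corner (hn : 1 ≤ n) (hs : Prim n s) {k l r r' : ℤ}
    (h1 : s.left.1 - s.left.2.1 + 1 = r')
    (h2 : (if s.left.2.2 - s.left.1 ≤ 0 then 1 else 0) = r)
    (h3 : s.bottom.1 - s.bottom.2.1 + 1 = l)
    (h4 : (if s.bottom.2.2 - s.bottom.1 ≤ 0 then 1 else 0) = k) :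
    Prim n (junctionTile n k l r r') :=
  hs.of_mem hn fun x y c r D k l h => ⟨c k, r l, le_rfl, D.col_lt hn k, le_rfl, D.row_lt hn l, by
    rw [D.corner_eq hn, h, h1, h2, h3, h4]⟩

theorem left_col (hn : 1 ≤ n) (hs : Prim n s) {y e i : ℤ} (j : ℤ) (h0 : 1 ≤ j)
    (h1 : j + s.left.1 ≤ n)
    (h2 : (if s.left.2.2 - s.left.1 ≤ j - 1 then 1 else 0) = y)
    (h3 : (if s.left.2.2 - s.left.1 ≤ j then 1 else 0) = e)
    (h4 : s.left.1 - s.left.2.1 + j = i) : Prim n (hatT (horTile n y e i)) :=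
  hs.of_mem hn fun x y c r D k l h => by
    have h5 := D.row k l
    rw [h] at h5
    have h6 := D.left_col_eq hn k l (j - 1).toNat (by omega)
    rw [Int.toNat_of_nonneg (by omega), sub_add_cancel, h, h2, h3, h4] at h6
    exact ⟨c k, r l + j, le_rfl, D.col_lt hn k, by omega, by omega, h6⟩

theorem white_row {x y : ℤ × ℤ → WangTile Lbl} {c r : ℤ → ℤ} (hn : 1 ≤ n) (D : Desub n x y c r)
    {k l : ℤ} (h0 : (y (k, l)).left.1 = 0) (h1 : (y (k, l)).bottom.1 = 0)
    (h2 : n ≤ (y (k, l)).left.2.2) (p q : ℕ) (hp : p < n) (hq : q < n) :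
    (x (c k + (p + 1), r l + (q + 1))).left = (1, 1, (p : ℤ) + 1) := by
  have hw := D.col k l
  have hh := D.row k l
  rw [h0] at hh
  rw [h1] at hw
  rw [← add_assoc, ← D.valid.2.1 (c k + p, r l + (q + 1))]
  induction p with
  | zero =>
    have := D.left_col_eq hn k l q (by omega)
    simp only [Nat.cast_zero, add_zero]
    rw [this, if_neg (by omega)]
    simp [hatT, horTile]
  | succ p ih =>
    push_cast at hp ⊢
    have h3 := ih (by omega)
    have h4 := D.valid.2.1 (c k + p, r l + (q + 1))
    rw [h3] at h4
    dsimp only at h4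
    obtain ⟨i, j, h⟩ := exists_eq_whiteTile (D.valid.1 (c k + (p + 1), r l + (q + 1)))
      (by rw [← add_assoc, ← h4])
      (by rw [D.bottom_fst_eq (by omega) (by omega), if_neg (by omega)])
    rw [add_assoc, h] at h4
    rw [h]
    simp [whiteTile] at h4 ⊢
    omega

theorem white (hn : 1 ≤ n) {i j : ℤ} (hi : 1 ≤ i) (hi' : i ≤ n) (hj : 1 ≤ j) (hj' : j ≤ n) :
    Prim n (whiteTile i j) := by
  have key : ∀ x y c r, Chain n 1 x y c r → ∀ k l, ∃ i j, c k ≤ i ∧ i < c (k + 1) ∧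
      r l ≤ j ∧ j < r (l + 1) ∧ (x (i, j)).left.1 = 0 ∧ (x (i, j)).bottom.1 = 0 ∧
        n ≤ (x (i, j)).left.2.2 ∧ n ≤ (x (i, j)).bottom.2.2 := fun x y c r h k l => by
    have D := h.desub
    refine ⟨c k, r l, le_rfl, D.col_lt hn k, le_rfl, D.row_lt hn l, ?_⟩
    rw [D.corner_eq hn]
    simp only [junctionTile, true_and]
    constructor <;> split_ifs <;> omega
  refine ⟨2, fun x y c r h k l => ?_⟩
  obtain ⟨x1, c1, r1, c2, r2, D, h, rfl, rfl⟩ := h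
  obtain ⟨a, b, h0, h1, h2, h3, h4, h5, h6, h7⟩ := key _ _ _ _ h k l
  have hw := D.col a b
  have hh := D.row a b
  rw [h4] at hh
  rw [h5] at hw
  have M1 := (strictMono_int_of_lt_succ (D.col_lt hn)).monotone
  have M2 := (strictMono_int_of_lt_succ (D.row_lt hn)).monotone
  have N1 := M1 h0
  have N2 := M1 (show a + 1 ≤ _ from h1)
  have N3 := M2 h2
  have N4 := M2 (show b + 1 ≤ _ from h3)
  refine ⟨c1 a + i, r1 b + j, ?_, ?_, ?_, ?_, ?_⟩
  · simp only [Function.comp_apply]; omega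
  · simp only [Function.comp_apply]; omega
  · simp only [Function.comp_apply]; omega
  · simp only [Function.comp_apply]; omega
  have e1 := white_row hn D h4 h5 h6 (i - 1).toNat (j - 1).toNat (by omega) (by omega)
  have e2 := white_row hn D.swap h5 h4 h7 (j - 1).toNat (i - 1).toNat (by omega) (by omega)
  rw [Int.toNat_of_nonneg (by omega), Int.toNat_of_nonneg (by omega), sub_add_cancel,
    sub_add_cancel] at e1 e2
  have e3 : (x (c1 a + i, r1 b + j)).bottom = (1, 1, j) := e2
  obtain ⟨i', j', e4⟩ := exists_eq_whiteTile (D.valid.1 (c1 a + i, r1 b + j)) (by rw [e1])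
    (by rw [e3])
  rw [e4] at e1 e3 ⊢
  simp [whiteTile] at e1 e3
  rw [e1, e3]

end Prim

/-- All tiles occur in all blocks of high enough level. -/
theorem prim_of_mem {n : ℤ} (hn : 1 ≤ n) {t : WangTile Lbl} (ht : t ∈ Tmet n) : Prim n t := by
  have j1111 : Prim n (junctionTile n 1 1 1 1) := by
    refine (Prim.white hn le_rfl hn le_rfl hn).corner hn ?_ ?_ ?_ ?_ <;> simp [whiteTile]
  have blueV : ∀ i, 0 ≤ i → i < n → Prim n (hatT (horTile n 0 0 i)) := fun i h0 h1 => by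
    refine j1111.left_col hn (i + 1) (by omega) ?_ ?_ ?_ ?_ <;> simp [junctionTile] <;> omega
  have yellowV : ∀ i, 1 ≤ i → i ≤ n → Prim n (hatT (horTile n 1 1 i)) := fun i h0 h1 => by
    refine (blueV 0 le_rfl (by omega)).hat.left_col hn i h0 ?_ ?_ ?_ ?_ <;>
      simp [horTile, hatT] <;> omega
  have greenV' : ∀ i, 0 ≤ i → i < n → Prim n (hatT (horTile n 0 1 i)) := fun i h0 h1 => by
    refine (yellowV (i + 1) (by omega) (by omega)).hat.left_col hn (i + 1) (by omega) ?_ ?_ ?_ ?_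
      <;> simp [horTile, hatT] <;> omega
  have j0100 : Prim n (junctionTile n 0 1 0 0) := by
    refine (yellowV 1 le_rfl hn).hat.corner hn ?_ ?_ ?_ ?_ <;> simp [horTile, hatT] <;> omega
  have greenV : ∀ i, 0 ≤ i → i ≤ n → Prim n (hatT (horTile n 0 1 i)) := fun i h0 h1 => by
    rcases eq_or_lt_of_le h1 with rfl | h1
    · refine j0100.left_col hn i hn ?_ ?_ ?_ ?_ <;> simp [junctionTile]
    · exact greenV' i h0 h1
  have j1101 : Prim n (junctionTile n 1 1 0 1) := by
    refine (greenV 0 le_rfl (by omega)).corner hn ?_ ?_ ?_ ?_ <;> simp [horTile, hatT]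
    omega
  have j0101 : Prim n (junctionTile n 0 1 0 1) := by
    refine (greenV 1 (by omega) hn).corner hn ?_ ?_ ?_ ?_ <;> simp [horTile, hatT]
    omega
  have j0000 : Prim n (junctionTile n 0 0 0 0) := by
    refine j0101.corner hn ?_ ?_ ?_ ?_ <;> simp [junctionTile] <;> omega
  have hV : ∀ y e i : ℤ, 0 ≤ y → y ≤ e → e ≤ 1 → y ≤ i → i ≤ n → i < n + e →
      Prim n (hatT (horTile n y e i)) := by
    intro y e i h0 h1 h2 h3 h4 h5
    obtain rfl | rfl : y = 0 ∨ y = 1 := by omega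
    · obtain rfl | rfl : e = 0 ∨ e = 1 := by omega
      · exact blueV i h3 (by omega)
      · exact greenV i h3 h4
    · obtain rfl : e = 1 := by omega
      exact yellowV i h3 h4
  rw [mem_Tmet_iff] at ht
  obtain ⟨i, j, h0, h1, h2, h3, rfl⟩ | ⟨y, e, i, h0, h1, h2, h3, h4, h5, rfl⟩ |
      ⟨y, e, i, h0, h1, h2, h3, h4, h5, rfl⟩ | ⟨k, l, r, s, h0, h1, h2, h3, h4, h5, h6, h7, rfl⟩ := ht
  · exact Prim.white hn h0 h1 h2 h3
  · exact (hV y e i h0 h1 h2 h3 h4 h5).hat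
  · exact hV y e i h0 h1 h2 h3 h4 h5
  · have key : (k = 0 ∧ l = 0 ∧ r = 0 ∧ s = 0) ∨ (k = 0 ∧ l = 0 ∧ r = 0 ∧ s = 1) ∨
        (k = 0 ∧ l = 1 ∧ r = 0 ∧ s = 0) ∨ (k = 0 ∧ l = 1 ∧ r = 0 ∧ s = 1) ∨
        (k = 0 ∧ l = 1 ∧ r = 1 ∧ s = 1) ∨ (k = 1 ∧ l = 1 ∧ r = 0 ∧ s = 1) ∨
        (k = 1 ∧ l = 1 ∧ r = 1 ∧ s = 1) := by omega
    rcases key with ⟨rfl, rfl, rfl, rfl⟩ | ⟨rfl, rfl, rfl, rfl⟩ | ⟨rfl, rfl, rfl, rfl⟩ |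
      ⟨rfl, rfl, rfl, rfl⟩ | ⟨rfl, rfl, rfl, rfl⟩ | ⟨rfl, rfl, rfl, rfl⟩ | ⟨rfl, rfl, rfl, rfl⟩
    exacts [j0000, j0100.hat, j0100, j0101, j1101.hat, j1101, j1111]

/-- `x` restricted to `S` occurs in all blocks of high enough level of all configurations. -/
def Recurs (n : ℤ) (x : ℤ × ℤ → WangTile Lbl) (S : Set (ℤ × ℤ)) : Prop :=
  ∃ m, ∀ x' y c r, Chain n m x' y c r → ∀ k l, ∃ q : ℤ × ℤ, ∀ s ∈ S,
    c k ≤ s.1 + q.1 ∧ s.1 + q.1 < c (k + 1) ∧ r l ≤ s.2 + q.2 ∧ s.2 + q.2 < r (l + 1) ∧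
    x' (s.1 + q.1, s.2 + q.2) = x s

/-- The rectangle `[a, a'] × [b, b']`. -/
def rect (a a' b b' : ℤ) : Set (ℤ × ℤ) := {s | a ≤ s.1 ∧ s.1 ≤ a' ∧ b ≤ s.2 ∧ s.2 ≤ b'}

namespace Recurs

variable {n : ℤ} {x y : ℤ × ℤ → WangTile Lbl} {c r : ℤ → ℤ} {S S' : Set (ℤ × ℤ)}

theorem of_tr {a a' b b' : ℤ} (h : Recurs n (tr x) (rect a a' b b')) :
    Recurs n x (rect b b' a a') := by
  obtain ⟨m, hm⟩ := h
  refine ⟨m, fun x' y c r h k l => ?_⟩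
  obtain ⟨q, hq⟩ := hm _ _ _ _ h.swap l k
  refine ⟨(q.2, q.1), fun s hs => ?_⟩
  obtain ⟨h1, h2, h3, h4, h5⟩ := hq (s.2, s.1) ⟨hs.2.2.1, hs.2.2.2, hs.1, hs.2.1⟩
  exact ⟨h3, h4, h1, h2, hatT_injective h5⟩

theorem margin (hn : 1 ≤ n) (h : Recurs n x S) : ∃ m, ∀ x' y c r, Chain n m x' y c r →
    ∀ k l, ∃ q : ℤ × ℤ, ∀ s ∈ S,
      c k ≤ s.1 + q.1 ∧ s.1 + q.1 + 2 ≤ c (k + 1) ∧ r l ≤ s.2 + q.2 ∧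
      s.2 + q.2 + 2 ≤ r (l + 1) ∧ x' (s.1 + q.1, s.2 + q.2) = x s := by
  obtain ⟨m, hm⟩ := h
  refine ⟨m + 2, fun x' y c r h k l => ?_⟩
  obtain ⟨y1, c1, r1, c2, r2, h1, h2, rfl, rfl⟩ := h.split
  obtain ⟨q, hq⟩ := hm _ _ _ _ h1 (c2 k) (r2 l)
  refine ⟨q, fun s hs => ?_⟩
  obtain ⟨a1, a2, a3, a4, a5⟩ := hq s hs
  have b1 := h1.col_mono hn (show c2 k + 1 < c2 (k + 1) by have := h2.two_width hn k; omega)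
  have b2 := h1.row_mono hn (show r2 l + 1 < r2 (l + 1) by have := h2.swap.two_width hn l; omega)
  refine ⟨a1, ?_, a3, ?_, a5⟩ <;> simp only [Function.comp_apply] <;> omega

theorem lift (hn : 1 ≤ n) (m : ℕ) (hy : Recurs n y S') (p : ℤ × ℤ) (hp : p ∈ S')
    (hl : ∀ x' y' c r, Chain n m x' y' c r → ∀ q : ℤ × ℤ,
      (∀ s ∈ S', y' (s.1 + q.1, s.2 + q.2) = y s) → ∃ Q : ℤ × ℤ, ∀ s ∈ S,
        c (p.1 + q.1) ≤ s.1 + Q.1 ∧ s.1 + Q.1 < c (p.1 + q.1 + 2) ∧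
        r (p.2 + q.2) ≤ s.2 + Q.2 ∧ s.2 + Q.2 < r (p.2 + q.2 + 2) ∧
        x' (s.1 + Q.1, s.2 + Q.2) = x s) : Recurs n x S := by
  obtain ⟨M, hM⟩ := hy.margin hn
  refine ⟨m + M, fun x' z c r h k l => ?_⟩
  obtain ⟨y', c1, r1, c2, r2, h1, h2, rfl, rfl⟩ := h.split
  obtain ⟨q, hq⟩ := hM _ _ _ _ h2 k l
  obtain ⟨Q, hQ⟩ := hl _ _ _ _ h1 q fun s hs => (hq s hs).2.2.2.2
  obtain ⟨b1, b2, b3, b4, -⟩ := hq p hp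
  refine ⟨Q, fun s hs => ?_⟩
  obtain ⟨a1, a2, a3, a4, a5⟩ := hQ s hs
  exact ⟨((h1.col_mono hn).monotone b1).trans a1, a2.trans_le ((h1.col_mono hn).monotone b2),
    ((h1.row_mono hn).monotone b3).trans a3, a4.trans_le ((h1.row_mono hn).monotone b4), a5⟩

theorem single (hn : 1 ≤ n) (hx : ValidConfig (Tmet n) x) (a b : ℤ) :
    Recurs n x (rect a a b b) := by
  obtain ⟨m, hm⟩ := prim_of_mem hn (hx.1 (a, b))
  refine ⟨m, fun x' y c r h k l => ?_⟩
  obtain ⟨i, j, h0, h1, h2, h3, h4⟩ := hm _ _ _ _ h k l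
  refine ⟨(i - a, j - b), fun s hs => ?_⟩
  obtain rfl : s = (a, b) := Prod.ext (le_antisymm hs.2.1 hs.1) (le_antisymm hs.2.2.2 hs.2.2.1)
  simp only [add_sub_cancel]
  exact ⟨h0, h1, h2, h3, h4⟩

theorem of_ext (hn : 1 ≤ n) (D : Desub n x y c r) (k l : ℤ)
    (h : ∀ s ∈ S, c k ≤ s.1 ∧ s.1 ≤ c (k + 1) ∧ r l ≤ s.2 ∧ s.2 ≤ r (l + 1) ∧
      (s.1 = c k → s.2 < r (l + 1)) ∧ (s.2 = r l → s.1 < c (k + 1))) : Recurs n x S := by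
  refine (single hn D.valid' k l).lift hn 1 (k, l) ⟨le_rfl, le_rfl, le_rfl, le_rfl⟩
    fun x' y' c' r' hc q hq => ?_
  have D' := hc.desub
  have e := hq (k, l) ⟨le_rfl, le_rfl, le_rfl, le_rfl⟩
  dsimp only at e ⊢
  refine ⟨(c' (k + q.1) - c k, r' (l + q.2) - r l), fun s hs => ?_⟩
  obtain ⟨h1, h2, h3, h4, h5, h6⟩ := h s hs
  have w := D'.width_eq D e
  have w' := D'.height_eq D e
  have w2 := D'.col_lt hn (k + q.1 + 1)
  have w3 := D'.row_lt hn (l + q.2 + 1)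
  rw [add_assoc (k + q.1)] at w2
  rw [add_assoc (l + q.2)] at w3
  have := D'.ext_eq hn D e (i := s.1 - c k) (j := s.2 - r l) (by omega) (by omega) (by omega)
    (by omega) (by omega) (by omega)
  norm_num at w2 w3
  refine ⟨by omega, by omega, by omega, by omega, ?_⟩
  rw [show s = (c k + (s.1 - c k), r l + (s.2 - r l)) by ext <;> simp, ← this]
  congr 2 <;> dsimp only <;> ring

theorem of_col (hn : 1 ≤ n) (D : Desub n x y c r) (k l : ℤ)
    (hy : Recurs n y (rect k k l (l + 1)))
    (h : ∀ s ∈ S, c k ≤ s.1 ∧ s.1 ≤ c (k + 1) ∧ r l ≤ s.2 ∧ s.2 ≤ r (l + 1) ∧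
      (s.2 = r l → s.1 < c (k + 1))) : Recurs n x S := by
  refine hy.lift hn 1 (k, l) ⟨le_rfl, le_rfl, le_rfl, by simp⟩
    fun x' y' c' r' hc q hq => ?_
  have D' := hc.desub
  have e := hq (k, l) ⟨le_rfl, le_rfl, le_rfl, by simp⟩
  have e1 := hq (k, l + 1) ⟨le_rfl, le_rfl, by simp, le_rfl⟩
  dsimp only at e e1 ⊢
  rw [add_right_comm] at e1
  refine ⟨(c' (k + q.1) - c k, r' (l + q.2) - r l), fun s hs => ?_⟩
  obtain ⟨h1, h2, h3, h4, h6⟩ := h s hs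
  have w := D'.width_eq D e
  have w' := D'.height_eq D e
  have w2 := D'.col_lt hn (k + q.1 + 1)
  have w3 := D'.row_lt hn (l + q.2 + 1)
  have v2 := D.col_lt hn k
  have v3 := D.row_lt hn (l + 1)
  rw [add_assoc (k + q.1)] at w2
  rw [show s = (c k + (s.1 - c k), r l + (s.2 - r l)) by ext <;> simp]
  have : x' (c' (k + q.1) + (s.1 - c k), r' (l + q.2) + (s.2 - r l)) =
      x (c k + (s.1 - c k), r l + (s.2 - r l)) := by
    by_cases hs : s.1 = c k ∧ s.2 = r (l + 1)
    · have := D'.block_eq D e1 (i := 0) (j := 0) le_rfl (by have := D'.col_lt hn (k + q.1); omega)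
        le_rfl (by omega)
      rw [hs.1, hs.2, sub_self, show r l + (r (l + 1) - r l) = r (l + 1) + 0 by omega, ← this]
      congr 2
      omega
    · exact D'.ext_eq hn D e (i := s.1 - c k) (j := s.2 - r l) (by omega) (by omega) (by omega)
        (by omega) (by omega) (by omega)
  rw [add_assoc (l + q.2)] at w3
  norm_num at w2 w3
  refine ⟨by dsimp only; omega, by dsimp only; omega, by dsimp only; omega, by dsimp only; omega, ?_⟩
  rw [← this]
  congr 2 <;> dsimp only <;> ring

theorem of_row (hn : 1 ≤ n) (D : Desub n x y c r) (k l a b : ℤ)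
    (hy : Recurs n y (rect k (k + 1) l l))
    (h : ∀ s ∈ rect a (a + 1) b (b + 1), c k ≤ s.1 ∧ s.1 ≤ c (k + 1) ∧ r l ≤ s.2 ∧
      s.2 ≤ r (l + 1) ∧ (s.1 = c k → s.2 < r (l + 1))) :
    Recurs n x (rect a (a + 1) b (b + 1)) := by
  refine of_tr (of_col hn D.swap l k (of_tr (x := tr y) hy) fun s hs => ?_)
  obtain ⟨h1, h2, h3, h4, h5⟩ := h (s.2, s.1) ⟨hs.2.2.1, hs.2.2.2, hs.1, hs.2.1⟩
  exact ⟨h3, h4, h1, h2, h5⟩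

theorem of_blocks (hn : 1 ≤ n) {m : ℕ} (h : Chain n m x y c r) {k k' l l' : ℤ}
    (hk : k ≤ k') (hk' : k' ≤ k + 1) (hl : l ≤ l') (hl' : l' ≤ l + 1)
    (hy : Recurs n y (rect k k' l l'))
    (hS : ∀ s ∈ S, c k ≤ s.1 ∧ s.1 < c (k' + 1) ∧ r l ≤ s.2 ∧ s.2 < r (l' + 1)) :
    Recurs n x S := by
  refine hy.lift hn m (k, l) ⟨le_rfl, hk, le_rfl, hl⟩ fun x' y' c' r' hc q hq => ?_
  dsimp only
  refine ⟨(c' (k + q.1) - c k, r' (l + q.2) - r l), fun s hs => ?_⟩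
  obtain ⟨h1, h2, h3, h4⟩ := hS s hs
  obtain ⟨a, ha, ha'⟩ := exists_block (h.col_mono hn) s.1
  obtain ⟨b, hb, hb'⟩ := exists_block (h.row_mono hn) s.2
  have i1 : k < a + 1 := (h.col_mono hn).lt_iff_lt.1 (h1.trans_lt ha')
  have i2 : a < k' + 1 := (h.col_mono hn).lt_iff_lt.1 (ha.trans_lt h2)
  have i3 : l < b + 1 := (h.row_mono hn).lt_iff_lt.1 (h3.trans_lt hb')
  have i4 : b < l' + 1 := (h.row_mono hn).lt_iff_lt.1 (hb.trans_lt h4)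
  obtain ⟨e1, e2, -⟩ := hc.block_eq hn h (hq (k, l) ⟨le_rfl, hk, le_rfl, hl⟩)
  obtain ⟨e3, e4, e5⟩ := hc.block_eq hn h (hq (a, b)
    ⟨Int.lt_add_one_iff.1 i1, Int.lt_add_one_iff.1 i2, Int.lt_add_one_iff.1 i3,
      Int.lt_add_one_iff.1 i4⟩)
  dsimp only at e1 e2 e3 e4 e5
  have f1 : c' (a + q.1) = c a + (c' (k + q.1) - c k) := by
    obtain rfl | rfl : a = k ∨ a = k + 1 := by omega
    · omega
    · rw [add_right_comm]; omega
  have f2 : r' (b + q.2) = r b + (r' (l + q.2) - r l) := by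
    obtain rfl | rfl : b = l ∨ b = l + 1 := by omega
    · omega
    · rw [add_right_comm]; omega
  have g := e5 (s.1 - c a) (s.2 - r b) (by omega) (by omega) (by omega) (by omega)
  have m1 := (hc.col_mono hn).monotone (show k + q.1 ≤ a + q.1 by omega)
  have m2 := (hc.col_mono hn).monotone (show a + q.1 + 1 ≤ k + q.1 + 2 by omega)
  have m3 := (hc.row_mono hn).monotone (show l + q.2 ≤ b + q.2 by omega)
  have m4 := (hc.row_mono hn).monotone (show b + q.2 + 1 ≤ l + q.2 + 2 by omega)
  refine ⟨by omega, by omega, by omega, by omega, ?_⟩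
  rw [show s = (c a + (s.1 - c a), r b + (s.2 - r b)) by ext <;> simp, ← g]
  congr 2 <;> dsimp only <;> omega

theorem col_pair_of_pos (hn : 1 ≤ n) (D : Desub n x y c r) {k l a b : ℤ} (h1 : c k ≤ a)
    (h2 : a < c (k + 1)) (h3 : r l < b) (h4 : b < r (l + 1)) :
    Recurs n x (rect a a b (b + 1)) := by
  rcases eq_or_lt_of_le h1 with rfl | h1
  · have h5 := D.col_lt hn (k - 1)
    rw [sub_add_cancel] at h5
    refine of_ext hn D (k - 1) l fun s hs => ?_
    obtain ⟨a1, a2, a3, a4⟩ := hs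
    rw [sub_add_cancel]
    omega
  · refine of_ext hn D k l fun s hs => ?_
    obtain ⟨a1, a2, a3, a4⟩ := hs
    omega

theorem col_pair_of_left (hn : 1 ≤ n) (hx : ValidConfig (Tmet n) x) {a b : ℤ}
    (h : (x (a, b)).left.1 = 1) : Recurs n x (rect a a b (b + 1)) := by
  obtain ⟨y, c, r, D⟩ := exists_desub hn hx
  obtain ⟨k, h1, h2⟩ := exists_block (D.chain.col_mono hn) a
  obtain ⟨l, h3, h4⟩ := exists_block (D.chain.row_mono hn) b
  have h5 := D.left_fst_eq (l := l) (j := b - r l) (by omega) (by omega) a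
  rw [add_sub_cancel, h] at h5
  refine col_pair_of_pos hn D h1 h2 ?_ h4
  by_contra h6
  rw [if_pos (by omega)] at h5
  omega

theorem col_pair (hn : 1 ≤ n) (hx : ValidConfig (Tmet n) x) (a b : ℤ) :
    Recurs n x (rect a a b (b + 1)) := by
  obtain ⟨y, c, r, D⟩ := exists_desub hn hx
  obtain ⟨k, h1, h2⟩ := exists_block (D.chain.col_mono hn) a
  obtain ⟨l, h3, h4⟩ := exists_block (D.chain.row_mono hn) b
  rcases eq_or_lt_of_le h3 with rfl | h3
  · by_cases h5 : r l + 1 < r (l + 1)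
    · refine of_ext hn D k l fun s hs => ?_
      obtain ⟨a1, a2, a3, a4⟩ := hs
      omega
    · have h6 := D.row k l
      have h7 := (Tmet_fst (D.valid'.1 (k, l))).1
      have h8 := D.row_lt hn (l + 1)
      refine of_blocks hn D.chain le_rfl (by omega) (by omega) le_rfl
        (col_pair_of_left hn D.valid' (a := k) (b := l) (by omega)) fun s hs => ?_
      obtain ⟨a1, a2, a3, a4⟩ := hs
      omega
  · exact col_pair_of_pos hn D h1 h2 h3 h4

theorem row_pair (hn : 1 ≤ n) (hx : ValidConfig (Tmet n) x) (a b : ℤ) :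
    Recurs n x (rect a (a + 1) b b) := of_tr (col_pair hn hx.tr b a)

theorem square_of_white (hn : 1 ≤ n) (hx : ValidConfig (Tmet n) x) {a b : ℤ}
    (h : (x (a, b)).left.1 = 1) (h' : (x (a, b)).bottom.1 = 1) :
    Recurs n x (rect a (a + 1) b (b + 1)) := by
  obtain ⟨y, c, r, D⟩ := exists_desub hn hx
  obtain ⟨k, h1, h2⟩ := exists_block (D.chain.col_mono hn) a
  obtain ⟨l, h3, h4⟩ := exists_block (D.chain.row_mono hn) b
  have h5 := D.left_fst_eq (l := l) (j := b - r l) (by omega) (by omega) a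
  have h6 := D.bottom_fst_eq (k := k) (i := a - c k) (by omega) (by omega) b
  rw [add_sub_cancel] at h5 h6
  refine of_ext hn D k l fun s hs => ?_
  obtain ⟨a1, a2, a3, a4⟩ := hs
  split_ifs at h5 h6 <;> omega

theorem square (hn : 1 ≤ n) (hx : ValidConfig (Tmet n) x) (a b : ℤ) :
    Recurs n x (rect a (a + 1) b (b + 1)) := by
  obtain ⟨y, c, r, D⟩ := exists_desub hn hx
  obtain ⟨k, h1, h2⟩ := exists_block (D.chain.col_mono hn) a
  obtain ⟨l, h3, h4⟩ := exists_block (D.chain.row_mono hn) b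
  by_cases h5 : a = c k ∧ b + 1 = r (l + 1) <;> by_cases h6 : b = r l ∧ a + 1 = c (k + 1)
  · have h7 := D.row k l
    have h8 := D.col k l
    have h9 := Tmet_fst (D.valid'.1 (k, l))
    have h10 := D.row_lt hn (l + 1)
    have h11 := D.col_lt hn (k + 1)
    refine of_blocks hn D.chain (by omega) le_rfl (by omega) le_rfl
      (square_of_white hn D.valid' (a := k) (b := l) (by omega) (by omega)) fun s hs => ?_
    obtain ⟨a1, a2, a3, a4⟩ := hs
    omega
  · refine of_col hn D k l (col_pair hn D.valid' k l) fun s hs => ?_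
    obtain ⟨a1, a2, a3, a4⟩ := hs
    omega
  · refine of_row hn D k l a b (row_pair hn D.valid' k l) fun s hs => ?_
    obtain ⟨a1, a2, a3, a4⟩ := hs
    omega
  · refine of_ext hn D k l fun s hs => ?_
    obtain ⟨a1, a2, a3, a4⟩ := hs
    omega

end Recurs

/-- All finite windows of a valid configuration are uniformly recurrent. -/
theorem recurs_rect {n : ℤ} (hn : 1 ≤ n) {x : ℤ × ℤ → WangTile Lbl}
    (hx : ValidConfig (Tmet n) x) (a b : ℤ) (N : ℕ) : Recurs n x (rect a (a + N) b (b + N)) := by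
  obtain ⟨m, hm⟩ := exists_wide hn N
  obtain ⟨y, c, r, h⟩ := exists_chain hn m hx
  obtain ⟨k, h1, h2⟩ := exists_block (h.col_mono hn) a
  obtain ⟨l, h3, h4⟩ := exists_block (h.row_mono hn) b
  have h5 := hm _ _ _ _ h (k + 1)
  have h6 := hm _ _ _ _ h.swap (l + 1)
  refine Recurs.of_blocks hn h (by omega) le_rfl (by omega) le_rfl
    (Recurs.square hn h.valid' k l) fun s hs => ?_
  obtain ⟨a1, a2, a3, a4⟩ := hs
  omega

theorem tau_eq_map_letter {n : ℤ} (hn : 1 ≤ n) {u : Lbl} (h0 : u.1 = 0 ∨ u.1 = 1)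
    (h1 : u.1 ≤ u.2.2) (h2 : u.2.2 ≤ n + 1) {N : ℕ} (hN : (N : ℤ) = n + 1 - u.1) :
    tau n u = (List.range N).map fun i : ℕ => letter n u i := by
  obtain ⟨a, b, z⟩ := u
  dsimp only at h0 h1 h2 hN
  unfold tau
  split_ifs with h
  · dsimp only at h
    apply List.ext_getElem
    · simp; omega
    · intro i hi hi'
      rcases i with - | i
      · simp [letter, h]
      · simp [letter, h]
  · dsimp only at h
    apply List.ext_getElem
    · simp; omega
    · intro i hi hi'
      rcases i with - | i
      · simp [letter]
        omega
      · simp only [List.getElem_cons_succ, List.getElem_append, List.getElem_replicate,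
          List.length_replicate, List.getElem_map, List.getElem_range, letter]
        rw [if_neg (by push_cast; omega)]
        split_ifs <;> simp <;> push_cast at * <;> omega

theorem Tmet_label {n : ℤ} (hn : 1 ≤ n) {t : WangTile Lbl} (h : t ∈ Tmet n) :
    (t.left.1 ≤ t.left.2.2 ∧ t.left.2.2 ≤ n + 1) ∧
      (t.bottom.1 ≤ t.bottom.2.2 ∧ t.bottom.2.2 ≤ n + 1) := by
  rw [mem_Tmet_iff] at h
  obtain ⟨i, j, h0, h1, h2, h3, rfl⟩ | ⟨y, e, i, h0, h1, h2, h3, h4, h5, rfl⟩ |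
      ⟨y, e, i, h0, h1, h2, h3, h4, h5, rfl⟩ |
      ⟨k, l, r, s, h0, h1, h2, h3, h4, h5, h6, h7, rfl⟩ := h <;>
  simp [whiteTile, horTile, hatT, junctionTile] <;> omega

namespace Desub

variable {n : ℤ} {x y : ℤ × ℤ → WangTile Lbl} {c r : ℤ → ℤ}

theorem left_word (hn : 1 ≤ n) (D : Desub n x y c r) (k l : ℤ) {h : ℕ}
    (hh : (h : ℤ) = r (l + 1) - r l) :
    (List.range h).map (fun j : ℕ => (x (c k, r l + j)).left) = tau n (y (k, l)).left := by
  have h1 := Tmet_label hn (D.valid'.1 (k, l))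
  have h2 := D.row k l
  rw [tau_eq_map_letter hn (Tmet_fst (D.valid'.1 (k, l))).1 h1.1.1 h1.1.2 (N := h) (by omega)]
  refine List.map_congr_left fun j hj => D.left k l j (by omega) ?_
  have := List.mem_range.1 hj
  omega

theorem bottom_word (hn : 1 ≤ n) (D : Desub n x y c r) (k l : ℤ) {w : ℕ}
    (hw : (w : ℤ) = c (k + 1) - c k) :
    (List.range w).map (fun i : ℕ => (x (c k + i, r l)).bottom) = tau n (y (k, l)).bottom :=
  D.swap.left_word hn l k hw

theorem right_word (hn : 1 ≤ n) (D : Desub n x y c r) (k l : ℤ) {h : ℕ}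
    (hh : (h : ℤ) = r (l + 1) - r l) :
    (List.range h).map (fun j : ℕ => (x (c (k + 1) - 1, r l + j)).right) =
      tau n (y (k, l)).right := by
  rw [D.valid'.2.1 (k, l), ← D.left_word hn (k + 1) l hh]
  refine List.map_congr_left fun j _ => ?_
  rw [D.valid.2.1]
  simp only [sub_add_cancel]

theorem top_word (hn : 1 ≤ n) (D : Desub n x y c r) (k l : ℤ) {w : ℕ}
    (hw : (w : ℤ) = c (k + 1) - c k) :
    (List.range w).map (fun i : ℕ => (x (c k + i, r (l + 1) - 1)).top) = tau n (y (k, l)).top :=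
  D.swap.right_word hn l k hw

end Desub

theorem ValidConfig.validPattern {C : Type*} {T : Set (WangTile C)} {x : ℤ × ℤ → WangTile C}
    (hx : ValidConfig T x) (a b : ℤ) (w h : ℕ) :
    ValidPattern T w h fun i j => x (a + i, b + j) := by
  refine ⟨fun i j _ _ => hx.1 _, fun i j _ _ => ?_, fun i j _ _ => ?_⟩
  · dsimp only
    rw [hx.2.1]
    push_cast
    rw [add_assoc]
  · dsimp only
    rw [hx.2.2]
    push_cast
    rw [add_assoc]

theorem Desub.isPatternImage {n : ℤ} (hn : 1 ≤ n) {x y : ℤ × ℤ → WangTile Lbl} {c r : ℤ → ℤ}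
    (D : Desub n x y c r) (a b : ℤ) (w h : ℕ) :
    IsPatternImage n (Tmet n) w h (fun i j => y (a + i, b + j))
      (c (a + w) - c a).toNat (r (b + h) - r b).toNat (fun i j => x (c a + i, r b + j)) := by
  have hc := (D.chain.col_mono hn)
  have hr := (D.chain.row_mono hn)
  have hA : ∀ i : ℕ, (((c (a + i) - c a).toNat : ℕ) : ℤ) = c (a + i) - c a := fun i =>
    Int.toNat_of_nonneg (sub_nonneg.2 (hc.monotone (by omega)))
  have hB : ∀ i : ℕ, (((r (b + i) - r b).toNat : ℕ) : ℤ) = r (b + i) - r b := fun i =>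
    Int.toNat_of_nonneg (sub_nonneg.2 (hr.monotone (by omega)))
  refine ⟨fun i => (c (a + i) - c a).toNat, fun i => (r (b + i) - r b).toNat, by simp, by simp,
    rfl, rfl, fun k _ => ?_, fun k _ => ?_, fun k l _ _ => ?_⟩
  · have h1 := hA k
    have h2 := hA (k + 1)
    have h3 := D.col_lt hn (a + k)
    push_cast at h2
    rw [← add_assoc] at h2
    push_cast
    rw [← add_assoc]
    omega
  · have h1 := hB k
    have h2 := hB (k + 1)
    have h3 := D.row_lt hn (b + k)
    push_cast at h2
    rw [← add_assoc] at h2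
    push_cast
    rw [← add_assoc]
    omega
  · have hp : (fun i j : ℕ => x (c a + ((c (a + k) - c a).toNat + i : ℕ),
        r b + ((r (b + l) - r b).toNat + j : ℕ))) =
        fun i j : ℕ => x (c (a + k) + i, r (b + l) + j) := by
      funext i j
      push_cast
      rw [hA, hB]
      congr 2 <;> ring
    beta_reduce
    rw [hp]
    obtain ⟨w', hw'⟩ := Int.eq_ofNat_of_zero_le (sub_nonneg.2 (D.col_lt hn (a + k)).le)
    obtain ⟨h', hh'⟩ := Int.eq_ofNat_of_zero_le (sub_nonneg.2 (D.row_lt hn (b + l)).le)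
    have ew : (c (a + (k + 1 : ℕ)) - c a).toNat - (c (a + k) - c a).toNat = w' := by
      have h1 := hA k
      have h2 := hA (k + 1)
      push_cast at h2 ⊢
      rw [← add_assoc] at h2 ⊢
      omega
    have eh : (r (b + (l + 1 : ℕ)) - r b).toNat - (r (b + l) - r b).toNat = h' := by
      have h1 := hB l
      have h2 := hB (l + 1)
      push_cast at h2 ⊢
      rw [← add_assoc] at h2 ⊢
      omega
    have cw := D.col_lt hn (a + k)
    have ch := D.row_lt hn (b + l)
    rw [ew, eh]
    refine ⟨D.valid.validPattern _ _ _ _, ?_, ?_, ?_, ?_⟩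
    · rw [← D.right_word hn _ _ hh'.symm, rightWord]
      refine List.map_congr_left fun j _ => ?_
      congr 3
      omega
    · rw [← D.top_word hn _ _ hw'.symm, topWord]
      refine List.map_congr_left fun j _ => ?_
      congr 3
      omega
    · rw [← D.left_word hn _ _ hh'.symm, leftWord]
      simp
    · rw [← D.bottom_word hn _ _ hw'.symm, bottomWord]
      simp

theorem Chain.iterImage {n : ℤ} (hn : 1 ≤ n) {m : ℕ} {x y : ℤ × ℤ → WangTile Lbl} {c r : ℤ → ℤ}
    (h : Chain n m x y c r) (k l : ℤ) :
    IterImage n (Tmet n) m (y (k, l)) (c (k + 1) - c k).toNat (r (l + 1) - r l).toNat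
      (fun i j => x (c k + i, r l + j)) := by
  induction m generalizing x c r with
  | zero =>
    obtain ⟨-, rfl, rfl, rfl⟩ := h
    simp [IterImage]
  | succ m ih =>
    obtain ⟨x1, c1, r1, c2, r2, D, h, rfl, rfl⟩ := h
    refine ⟨_, _, _, ih h, ?_⟩
    have := D.isPatternImage hn (c2 k) (r2 l) (c2 (k + 1) - c2 k).toNat (r2 (l + 1) - r2 l).toNat
    rwa [Int.toNat_of_nonneg (sub_nonneg.2 (h.col_mono hn (lt_add_one k)).le),
      Int.toNat_of_nonneg (sub_nonneg.2 (h.row_mono hn (lt_add_one l)).le),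
      add_sub_cancel, add_sub_cancel] at this

theorem exists_nat_block {A : ℕ → ℕ} (h0 : A 0 = 0) {w i : ℕ} (hi : i < A w) :
    ∃ k < w, A k ≤ i ∧ i < A (k + 1) := by
  induction w with
  | zero => omega
  | succ w ih =>
    by_cases h : i < A w
    · obtain ⟨k, h1, h2⟩ := ih h
      exact ⟨k, by omega, h2⟩
    · exact ⟨w, by omega, by omega, hi⟩

theorem IsPatternImage.validPattern {n : ℤ} {T : Set (WangTile Lbl)} {w h w' h' : ℕ}
    {p q : ℕ → ℕ → WangTile Lbl} (hq : IsPatternImage n T w h p w' h' q)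
    (hp : ValidPattern T w h p) : ValidPattern T w' h' q := by
  obtain ⟨A, B, hA, hB, rfl, rfl, mA, mB, hq⟩ := hq
  refine ⟨fun i j hi hj => ?_, fun i j hi hj => ?_, fun i j hi hj => ?_⟩
  · obtain ⟨k, hk, k1, k2⟩ := exists_nat_block hA hi
    obtain ⟨l, hl, l1, l2⟩ := exists_nat_block hB hj
    have := (hq k l hk hl).1.1 (i - A k) (j - B l) (by omega) (by omega)
    beta_reduce at this
    rwa [Nat.add_sub_cancel' k1, Nat.add_sub_cancel' l1] at this
  · obtain ⟨k, hk, k1, k2⟩ := exists_nat_block hA (show i < A w by omega)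
    obtain ⟨l, hl, l1, l2⟩ := exists_nat_block hB hj
    by_cases h1 : i + 1 < A (k + 1)
    · have := (hq k l hk hl).1.2.1 (i - A k) (j - B l) (by omega) (by omega)
      beta_reduce at this
      rwa [Nat.add_sub_cancel' k1, Nat.add_sub_cancel' l1,
        show A k + (i - A k + 1) = i + 1 by omega] at this
    · have hk' : k + 1 < w := by
        rcases eq_or_lt_of_le (show k + 1 ≤ w from hk) with rfl | h2
        · omega
        · exact h2
      have e1 := (hq k l hk hl).2.1
      have e2 := (hq (k + 1) l hk' hl).2.2.2.1
      rw [← hp.2.1 k l hk' hl, ← e1, leftWord, rightWord, List.map_inj_left] at e2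
      have := e2 (j - B l) (List.mem_range.2 (by omega))
      rw [Nat.add_sub_cancel' l1] at this
      rw [show i + 1 = A (k + 1) + 0 by omega, this]
      congr 2
      omega
  · obtain ⟨k, hk, k1, k2⟩ := exists_nat_block hA hi
    obtain ⟨l, hl, l1, l2⟩ := exists_nat_block hB (show j < B h by omega)
    by_cases h1 : j + 1 < B (l + 1)
    · have := (hq k l hk hl).1.2.2 (i - A k) (j - B l) (by omega) (by omega)
      beta_reduce at this
      rwa [Nat.add_sub_cancel' k1, Nat.add_sub_cancel' l1,
        show B l + (j - B l + 1) = j + 1 by omega] at this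
    · have hl' : l + 1 < h := by
        rcases eq_or_lt_of_le (show l + 1 ≤ h from hl) with rfl | h2
        · omega
        · exact h2
      have e1 := (hq k l hk hl).2.2.1
      have e2 := (hq k (l + 1) hk hl').2.2.2.2
      rw [← hp.2.2 k l hk hl', ← e1, bottomWord, topWord, List.map_inj_left] at e2
      have := e2 (i - A k) (List.mem_range.2 (by omega))
      rw [Nat.add_sub_cancel' k1] at this
      rw [show j + 1 = B (l + 1) + 0 by omega, this]
      congr 2
      omega

theorem IterImage.validPattern {n : ℤ} {T : Set (WangTile Lbl)} {m : ℕ} {t : WangTile Lbl}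
    (ht : t ∈ T) {w h : ℕ} {q : ℕ → ℕ → WangTile Lbl} (hq : IterImage n T m t w h q) :
    ValidPattern T w h q := by
  induction m generalizing w h q with
  | zero =>
    obtain ⟨rfl, rfl, rfl⟩ := hq
    refine ⟨fun i j hi hj => ?_, fun i j hi hj => by omega, fun i j hi hj => by omega⟩
    obtain rfl : i = 0 := by omega
    obtain rfl : j = 0 := by omega
    exact ht
  | succ m ih =>
    obtain ⟨w', h', p, h1, h2⟩ := hq
    exact h2.validPattern (ih h1)

/-- the Wang shift `Ω_n` is minimal and equals the substitutive subshift
`X_{ω_n}`. -/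
theorem stmt19 (n : ℤ) (hn : 1 ≤ n) :
    (∀ X : Set ((ℤ × ℤ) → WangTile Lbl),
      X ⊆ {y | ValidConfig (Tmet n) y} → X.Nonempty → IsClosed X →
      (∀ k : ℤ × ℤ, ∀ y ∈ X, (fun m : ℤ × ℤ => y (m.1 + k.1, m.2 + k.2)) ∈ X) →
      X = {y | ValidConfig (Tmet n) y}) ∧
    (∀ z : ℤ × ℤ → WangTile Lbl,
      ValidConfig (Tmet n) z ↔
      ∀ (w h : ℕ) (pos : ℤ × ℤ),
        ∃ (m : ℕ) (t : WangTile Lbl) (wq hq : ℕ) (q : ℕ → ℕ → WangTile Lbl) (i0 j0 : ℕ),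
          t ∈ Tmet n ∧ IterImage n (Tmet n) m t wq hq q ∧
          i0 + w ≤ wq ∧ j0 + h ≤ hq ∧
          ∀ i j, i < w → j < h →
            q (i0 + i) (j0 + j) = z (pos.1 + i, pos.2 + j)) := by
  refine ⟨fun X hX hne hcl hinv => hX.antisymm fun y hy => ?_, fun z => ⟨fun hz w h pos => ?_,
    fun hz => ?_⟩⟩
  · obtain ⟨x, hx⟩ := hne
    rw [← hcl.closure_eq, mem_closure_iff]
    intro o ho hyo
    obtain ⟨I, u, h1, h2⟩ := isOpen_pi_iff.1 ho y hyo
    let N := I.sup fun s => s.1.natAbs + s.2.natAbs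
    have hN : ∀ s ∈ I, s ∈ rect (-N) (-N + (2 * N : ℕ)) (-N) (-N + (2 * N : ℕ)) := by
      intro s hs
      have : s.1.natAbs + s.2.natAbs ≤ N :=
        Finset.le_sup (f := fun s : ℤ × ℤ => s.1.natAbs + s.2.natAbs) hs
      refine ⟨?_, ?_, ?_, ?_⟩ <;> push_cast <;> omega
    obtain ⟨m, hm⟩ := recurs_rect hn hy (-N) (-N) (2 * N)
    obtain ⟨x', c, r, hc⟩ := exists_chain hn m (hX hx)
    obtain ⟨q, hq⟩ := hm _ _ _ _ hc 0 0
    refine ⟨_, h2 fun s hs => ?_, hinv q x hx⟩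
    dsimp only
    rw [(hq s (hN s hs)).2.2.2.2]
    exact (h1 s hs).2
  · obtain ⟨m, hm⟩ := recurs_rect hn hz pos.1 pos.2 (max w h)
    obtain ⟨y, c, r, hc⟩ := exists_chain hn m hz
    obtain ⟨q, hq⟩ := hm _ _ _ _ hc 0 0
    obtain ⟨a1, -, a3, -, -⟩ := hq (pos.1, pos.2) ⟨le_rfl, by simp, le_rfl, by simp⟩
    obtain ⟨-, a2, -, a4, -⟩ := hq (pos.1 + (max w h : ℕ), pos.2 + (max w h : ℕ))
      ⟨by simp, le_rfl, by simp, le_rfl⟩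
    have b1 := le_max_left w h
    have b2 := le_max_right w h
    dsimp only at a1 a2 a3 a4
    refine ⟨m, _, _, _, _, (pos.1 + q.1 - c 0).toNat, (pos.2 + q.2 - r 0).toNat,
      hc.valid'.1 (0, 0), hc.iterImage hn 0 0, by omega, by omega, fun i j hi hj => ?_⟩
    have := (hq (pos.1 + i, pos.2 + j) ⟨by simp, by dsimp only; omega, by simp,
      by dsimp only; omega⟩).2.2.2.2
    rw [← this]
    dsimp only
    congr 2 <;> push_cast <;> omega
  · refine ⟨fun s => ?_, fun s => ?_, fun s => ?_⟩
    · obtain ⟨m, t, wq, hq, q, i0, j0, ht, h1, h2, h3, h4⟩ := hz 1 1 s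
      have := (h1.validPattern ht).1 (i0 + 0) (j0 + 0) (by omega) (by omega)
      rw [h4 0 0 (by omega) (by omega)] at this
      simpa using this
    · obtain ⟨m, t, wq, hq, q, i0, j0, ht, h1, h2, h3, h4⟩ := hz 2 1 s
      have := (h1.validPattern ht).2.1 (i0 + 0) (j0 + 0) (by omega) (by omega)
      rw [add_assoc, h4 0 0 (by omega) (by omega), zero_add, h4 1 0 (by omega) (by omega)] at this
      simpa using this
    · obtain ⟨m, t, wq, hq, q, i0, j0, ht, h1, h2, h3, h4⟩ := hz 1 2 s
      have := (h1.validPattern ht).2.2 (i0 + 0) (j0 + 0) (by omega) (by omega)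
      rw [add_assoc j0, h4 0 0 (by omega) (by omega), zero_add,
        h4 0 1 (by omega) (by omega)] at this
      simpa using this
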